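/- arXiv:1909.09832 — 3 statements merged into one kernel-verified Lean document; each statement's English description precedes it below -/
import Mathlib

section
/- Let L be a finite Galois extension of K and let B be the integral closure of A in L. Then for any finite subset S of B there is an A-subalgebra B' of B with S ⊆ B' such that B' is free of finite rank as an A-module and B' is of complete intersection over A, i.e., for some n ≥ 0 there exists a surjective A-algebra homomorphism from the polynomial ring A[X₁, …, Xₙ] onto B' whose kernel is generated by n elements. -/
set_option synthInstance.maxHeartbeats 400000

/-- An `A`-algebra `C` is of *complete intersection* over `A` if for some `n ≥ 0` there is a
surjective `A`-algebra homomorphism `A[X₁, …, Xₙ] → C` whose kernel is generated by `n`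
elements. -/
def IsCompleteIntersectionOver (A C : Type*) [CommRing A] [CommRing C] [Algebra A C] : Prop :=
  ∃ (n : ℕ) (φ : MvPolynomial (Fin n) A →ₐ[A] C),
    Function.Surjective φ ∧
      ∃ g : Fin n → MvPolynomial (Fin n) A, RingHom.ker φ = Ideal.span (Set.range g)

set_option linter.all false

section
open Polynomial

namespace CISub

def HensVal {F Γ : Type*} [Field F] [LinearOrderedCommGroupWithZero Γ] (v : Valuation F Γ) : Prop :=
  ∀ g : F[X], (∀ i, v (g.coeff i) ≤ 1) → ∀ b : F, v b ≤ 1 → v (g.eval b) < 1 →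
    v (g.derivative.eval b) = 1 → ∃ c : F, g.eval c = 0 ∧ v (c - b) < 1

/-- `s` is a polynomial in `α` with integral coefficients in `E`. -/
def MonoIn (E : Type*) {F Γ : Type*} [Field E] [Field F] [Algebra E F]
    [LinearOrderedCommGroupWithZero Γ] (v : Valuation F Γ) (α s : F) : Prop :=
  ∃ g : E[X], (∀ i, v (algebraMap E F (g.coeff i)) ≤ 1) ∧ aeval α g = s

section
variable {E F Γ : Type*} [Field E] [Field F] [Algebra E F] [LinearOrderedCommGroupWithZero Γ]
  (v : Valuation F Γ)

theorem poly_int {R Γ : Type*} [CommRing R] [LinearOrderedCommGroupWithZero Γ] (v : Valuation R Γ)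
    (g : R[X]) (hg : ∀ i, v (g.coeff i) ≤ 1) (b : R) (hb : v b ≤ 1) : v (g.eval b) ≤ 1 := by
  rw [eval_eq_sum_range]
  refine v.map_sum_le fun i _ => ?_
  rw [map_mul, map_pow]
  exact mul_le_one' (hg i) (pow_le_one' hb i)

theorem poly_deriv_coeff {R Γ : Type*} [CommRing R] [LinearOrderedCommGroupWithZero Γ]
    (v : Valuation R Γ)
    (g : R[X]) (hg : ∀ i, v (g.coeff i) ≤ 1) : ∀ i, v (g.derivative.coeff i) ≤ 1 := by
  intro i
  rw [coeff_derivative, map_mul]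
  refine mul_le_one' (hg _) ?_
  have : v ((i+1 : ℕ) : R) ≤ 1 := by
    have : ((i+1 : ℕ) : R) ∈ v.integer := natCast_mem _ _
    exact this
  exact_mod_cast this

theorem exists_low_poly {α s : F} (hα : IsIntegral E α)
    (hs : s ∈ IntermediateField.adjoin E {α}) :
    ∃ g : E[X], aeval α g = s ∧ g.natDegree < (minpoly E α).natDegree := by
  have : s ∈ Algebra.adjoin E {α} := by
    rw [← IntermediateField.adjoin_simple_toSubalgebra_of_isAlgebraic hα.isAlgebraic]; exact hs
  rw [Algebra.adjoin_singleton_eq_range_aeval] at this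
  obtain ⟨g, hg⟩ := this
  refine ⟨g %ₘ minpoly E α, ?_, ?_⟩
  · rw [← hg]
    exact aeval_modByMonic_eq_self_of_root (minpoly.aeval E α)
  · exact natDegree_modByMonic_lt _ (minpoly.monic hα) (minpoly.ne_one _ _)

theorem mono_of_indep {α : F} (hα : IsIntegral E α)
    (h : ∀ g : E[X], g.natDegree < (minpoly E α).natDegree →
      (∀ i, v (algebraMap E F (g.coeff i)) ≤ 1) → (∃ i, g.coeff i = 1) → ¬ v (aeval α g) < 1)
    {s : F} (hs : s ∈ IntermediateField.adjoin E {α}) (hvs : v s ≤ 1) : MonoIn E v α s := by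
  obtain ⟨g, hg, hd⟩ := exists_low_poly hα hs
  by_cases hg0 : g = 0
  · exact ⟨0, by simp, by simpa [hg0] using hg⟩
  obtain ⟨i, hi, hmax⟩ := Finset.exists_max_image g.support (fun i => v (algebraMap E F (g.coeff i)))
    (by simpa using hg0)
  have hmax' : ∀ j, v (algebraMap E F (g.coeff j)) ≤ v (algebraMap E F (g.coeff i)) := by
    intro j
    by_cases hj : j ∈ g.support
    · exact hmax j hj
    · simp [notMem_support_iff.mp hj]
  refine ⟨g, fun j => (hmax' j).trans ?_, hg⟩
  by_contra hlt
  push Not at hlt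
  have hc : g.coeff i ≠ 0 := mem_support_iff.mp hi
  have hc' : v (algebraMap E F (g.coeff i)) ≠ 0 := by simpa using hc
  refine h (C (g.coeff i)⁻¹ * g) ?_ ?_ ⟨i, by simp [hc]⟩ ?_
  · rwa [natDegree_C_mul (inv_ne_zero hc)]
  · intro j
    rw [coeff_C_mul, map_mul, map_mul, map_inv₀, map_inv₀, inv_mul_le_iff₀ (by simpa [zero_lt_iff] using hc)]
    simpa using hmax' j
  · rw [map_mul, aeval_C, hg, map_mul, map_inv₀, map_inv₀, inv_mul_lt_iff₀ (by simpa [zero_lt_iff] using hc)]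
    simpa using hvs.trans_lt hlt

instance hasExt : (v.comap (algebraMap E F)).HasExtension v := ⟨Valuation.IsEquiv.refl⟩

abbrev O (E : Type*) {F Γ : Type*} [Field E] [Field F] [Algebra E F]
    [LinearOrderedCommGroupWithZero Γ] (v : Valuation F Γ) := (v.comap (algebraMap E F)).valuationSubring

open IsLocalRing

theorem residue_eq_zero (x : v.valuationSubring) : residue _ x = 0 ↔ v (x : F) < 1 := by
  rw [residue_eq_zero_iff]
  exact Valuation.mem_maximalIdeal_iff ..

theorem residue_aeval (g : (O E v)[X]) (x : v.valuationSubring) :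
    residue _ (aeval x g) = aeval (residue _ x) (g.map (residue (O E v))) := by
  rw [aeval_def, aeval_def, eval₂_map, hom_eval₂]
  rfl

theorem coe_aeval (g : (O E v)[X]) (x : v.valuationSubring) :
    ((aeval x g : v.valuationSubring) : F) = aeval (x : F) (g.map (O E v).subtype) := by
  rw [aeval_def, aeval_def, eval₂_map]
  exact hom_eval₂ _ _ v.valuationSubring.subtype _

theorem lift_poly (g : E[X]) (hg : ∀ i, v (algebraMap E F (g.coeff i)) ≤ 1) :
    ∃ g' : (O E v)[X], g'.map (O E v).subtype = g := by
  have : g ∈ lifts (O E v).subtype := by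
    rw [lifts_iff_coeff_lifts]
    intro i
    exact ⟨⟨_, hg i⟩, rfl⟩
  exact this

theorem indep_of_residue {α : F} (hα1 : v α ≤ 1)
    (hd : (minpoly E α).natDegree ≤
      (minpoly (ResidueField (O E v)) (residue v.valuationSubring ⟨α, hα1⟩)).natDegree) :
    ∀ g : E[X], g.natDegree < (minpoly E α).natDegree →
      (∀ i, v (algebraMap E F (g.coeff i)) ≤ 1) → (∃ i, g.coeff i = 1) → ¬ v (aeval α g) < 1 := by
  intro g hgd hg ⟨i, hi⟩ hlt
  obtain ⟨g', rfl⟩ := lift_poly v g hg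
  have h1 := coe_aeval v g' ⟨α, hα1⟩
  rw [← h1, ← residue_eq_zero, residue_aeval] at hlt
  have h3 : g'.coeff i = 1 := by
    apply Subtype.ext
    simpa using hi
  have h2 : g'.map (residue (O E v)) ≠ 0 := by
    intro h0
    have := congrArg (fun p => p.coeff i) h0
    simp [h3] at this
  have h4 := natDegree_le_natDegree (minpoly.degree_le_of_ne_zero _ _ h2 hlt)
  have h5 : (g'.map (residue (O E v))).natDegree ≤ g'.natDegree := natDegree_map_le
  rw [natDegree_map_eq_of_injective (Subtype.val_injective)] at hgd
  omega

end
end CISub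

namespace CISub
section
variable {E F Γ : Type*} [Field E] [Field F] [Algebra E F] [LinearOrderedCommGroupWithZero Γ]
  (v : Valuation F Γ)
open IsLocalRing

theorem residue_algebraic (hint : ∀ x, v x ≤ 1 → ∃ f : E[X], f.Monic ∧
      (∀ i, v (algebraMap E F (f.coeff i)) ≤ 1) ∧ aeval x f = 0)
    (y : ResidueField v.valuationSubring) : IsIntegral (ResidueField (O E v)) y := by
  obtain ⟨x, rfl⟩ := residue_surjective y
  obtain ⟨f, hm, hf, h0⟩ := hint x x.2
  obtain ⟨f', rfl⟩ := lift_poly v f hf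
  refine ⟨f'.map (residue (O E v)), ?_, ?_⟩
  · have : f'.Monic := monic_of_injective (f := (O E v).subtype) Subtype.val_injective hm
    exact this.map _
  · rw [← aeval_def, ← residue_aeval]
    have : aeval x f' = 0 := by
      apply Subtype.ext
      rw [coe_aeval, h0]; rfl
    rw [this, map_zero]

theorem unram_step (hens : HensVal v)
    (hint : ∀ x, v x ≤ 1 → ∃ f : E[X], f.Monic ∧
      (∀ i, v (algebraMap E F (f.coeff i)) ≤ 1) ∧ aeval x f = 0)
    (σ : F ≃ₐ[E] F) (hσ : ∀ x, v (σ x) = v x) (b : F) (hb : v b ≤ 1) (hσb : ¬ v (σ b - b) < 1) :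
    ∃ α : F, v α ≤ 1 ∧ α ∉ (algebraMap E F).range ∧ IsIntegral E α ∧
      ∀ s ∈ IntermediateField.adjoin E {α}, v s ≤ 1 → MonoIn E v α s := by
  -- there is a separable element outside of the residue field
  have hex : ∃ β : ResidueField v.valuationSubring, IsSeparable (ResidueField (O E v)) β ∧
      β ∉ (algebraMap (ResidueField (O E v)) (ResidueField v.valuationSubring)).range := by
    by_contra hno
    push Not at hno
    have hpi : IsPurelyInseparable (ResidueField (O E v)) (ResidueField v.valuationSubring) := by
      rw [isPurelyInseparable_iff]
      exact fun x => ⟨residue_algebraic v hint x, hno x⟩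
    let τ : v.valuationSubring →+* v.valuationSubring :=
      (σ : F →+* F).restrict v.valuationSubring v.valuationSubring (fun x hx => by
        rw [Valuation.mem_valuationSubring_iff] at hx ⊢
        exact (hσ x).le.trans hx)
    have : IsLocalHom τ := ⟨fun x hx => by
      by_contra hxu
      rw [← mem_nonunits_iff, ← mem_maximalIdeal, Valuation.mem_maximalIdeal_iff] at hxu
      have h2 : τ x ∈ maximalIdeal v.valuationSubring := by
        rw [Valuation.mem_maximalIdeal_iff]
        exact (hσ x).trans_lt hxu
      exact h2 hx⟩
    have heq := IsPurelyInseparable.injective_comp_algebraMap (ResidueField (O E v))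
      (ResidueField v.valuationSubring) (ResidueField v.valuationSubring)
      (a₁ := ResidueField.map τ) (a₂ := RingHom.id _) (by
        ext x
        obtain ⟨x, rfl⟩ := residue_surjective x
        change residue _ (τ (algebraMap (O E v) v.valuationSubring x)) = residue _ (algebraMap (O E v) v.valuationSubring x)
        congr 1
        apply Subtype.ext
        exact σ.commutes (x : E))
    have h3 := RingHom.congr_fun heq (residue _ ⟨b, hb⟩)
    have h4 : residue _ (τ ⟨b, hb⟩) = residue _ (⟨b, hb⟩ : v.valuationSubring) := h3
    rw [← sub_eq_zero, ← map_sub, residue_eq_zero] at h4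
    exact hσb h4
  obtain ⟨β, hsep, hβ⟩ := hex
  obtain ⟨b', rfl⟩ := residue_surjective β
  set q := minpoly (ResidueField (O E v)) (residue v.valuationSubring b') with hq
  have hqm : q.Monic := minpoly.monic hsep.isIntegral
  obtain ⟨p, hpq, hpd, hpm⟩ := lifts_and_natDegree_eq_and_monic (f := residue (O E v)) (p := q)
    (by
      rw [lifts_iff_coeff_lifts]
      intro i
      exact residue_surjective _) hqm
  set P : F[X] := p.map ((algebraMap E F).comp (O E v).subtype) with hP
  have hPeval : ∀ (r : (O E v)[X]) (x : v.valuationSubring),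
      (r.map ((algebraMap E F).comp (O E v).subtype)).eval (x : F) = ((aeval x r : v.valuationSubring) : F) := by
    intro r x
    rw [coe_aeval, ← map_map, eval_map_algebraMap]
  obtain ⟨α, hα0, hαb⟩ := hens P (by
      intro i
      rw [hP, coeff_map]
      exact (p.coeff i).2) b' b'.2 (by
      rw [hP, hPeval, ← residue_eq_zero, residue_aeval, hpq]
      exact minpoly.aeval _ _) (by
      rw [hP, derivative_map, hPeval]
      apply le_antisymm (aeval b' (derivative p)).2
      rw [← not_lt, ← residue_eq_zero, residue_aeval, ← derivative_map, hpq]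
      exact hsep.aeval_derivative_ne_zero (minpoly.aeval _ _))
  have hα1 : v α ≤ 1 := by
    have : α = (α - b') + b' := by ring
    rw [this]
    exact (v.map_add _ _).trans (max_le hαb.le b'.2)
  have hres : residue v.valuationSubring ⟨α, hα1⟩ = residue _ b' := by
    rw [← sub_eq_zero, ← map_sub, residue_eq_zero]
    exact hαb
  have hroot : aeval α (p.map (O E v).subtype) = 0 := by
    rw [← hα0, hP, ← map_map, eval_map_algebraMap]
  have hint' : IsIntegral E α := ⟨p.map (O E v).subtype, hpm.map _, hroot⟩
  refine ⟨α, hα1, ?_, hint', ?_⟩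
  · rintro ⟨e, rfl⟩
    apply hβ
    refine ⟨residue _ ⟨e, hα1⟩, ?_⟩
    rw [← hres]
    rfl
  · intro s hs hvs
    refine mono_of_indep v hint' (indep_of_residue v hα1 ?_) hs hvs
    rw [hres, ← hq, ← hpd]
    have := natDegree_le_of_dvd (minpoly.dvd E α hroot) (hpm.map _).ne_zero
    rwa [natDegree_map_eq_of_injective (Subtype.val_injective)] at this
end
end CISub

namespace CISub

theorem exists_normal_prime_index (G : Type*) [Group G] [Finite G] [Nontrivial G]
    [Group.IsSolvable G] : ∃ N : Subgroup G, N.Normal ∧ N.index.Prime := by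
  have h := Group.IsSolvable.commutator_lt_top_of_nontrivial G
  obtain ⟨M, hM, hle⟩ := (eq_top_or_exists_le_coatom (commutator G)).resolve_left h.ne
  have hN : M.Normal := Subgroup.Normal.of_commutator_le _ hle
  refine ⟨M, hN, ?_⟩
  have hne : M.index ≠ 1 := fun h1 => hM.1 (Subgroup.index_eq_one.mp h1)
  obtain ⟨l, hl, hdvd⟩ := Nat.exists_prime_and_dvd hne
  have := Fact.mk hl
  rw [Subgroup.index] at hdvd
  obtain ⟨x, hx⟩ := exists_prime_orderOf_dvd_card' l hdvd
  have hlt : M < (Subgroup.zpowers x).comap (QuotientGroup.mk' M) := by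
    refine lt_of_le_of_ne ?_ ?_
    · intro m hm
      have : (QuotientGroup.mk' M) m = 1 := by simpa using hm
      rw [Subgroup.mem_comap, this]
      exact one_mem _
    · intro heq
      obtain ⟨y, rfl⟩ := QuotientGroup.mk'_surjective M x
      have : y ∈ M := by
        rw [heq]
        exact Subgroup.mem_zpowers _
      have h1 : (QuotientGroup.mk' M) y = 1 := by simpa using this
      rw [h1, orderOf_one] at hx
      exact hl.one_lt.ne hx
  have htop := hM.2 _ hlt
  have hz : Subgroup.zpowers x = ⊤ := by
    rw [eq_top_iff]
    intro y _
    obtain ⟨y, rfl⟩ := QuotientGroup.mk'_surjective M y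
    have : y ∈ (Subgroup.zpowers x).comap (QuotientGroup.mk' M) := by rw [htop]; trivial
    exact this
  have : Nat.card (Subgroup.zpowers x) = Nat.card (G ⧸ M) := by
    rw [hz]; exact Subgroup.card_top
  rw [Nat.card_zpowers, hx] at this
  rw [Subgroup.index, ← this]
  exact hl

section
variable {E F Γ : Type*} [Field E] [Field F] [Algebra E F] [LinearOrderedCommGroupWithZero Γ]
  (v : Valuation F Γ)
open IsLocalRing

theorem natCast_le_one (n : ℕ) : v (n : F) ≤ 1 := by
  have : ((n : ℕ) : F) ∈ v.integer := natCast_mem _ _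
  exact this

theorem wild_prime (σ : F ≃ₐ[E] F) (hσ : ∀ x, x ≠ 0 → v (σ x - x) < v x)
    (hinv : ∀ x, v (σ x) = v x) (l : ℕ) (hl : l.Prime) (ho : orderOf σ = l) :
    v (l : F) < 1 := by
  by_contra hlt
  have hv : v (l : F) = 1 := le_antisymm (natCast_le_one v l) (not_lt.mp hlt)
  have hl0 : (l : F) ≠ 0 := fun h => by simp [h] at hv
  have hne : σ ≠ 1 := fun h => by
    rw [h, orderOf_one] at ho
    exact hl.one_lt.ne ho
  obtain ⟨x, hx⟩ : ∃ x, σ x ≠ x := by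
    by_contra hcon
    push Not at hcon
    exact hne (AlgEquiv.ext hcon)
  let T : F → F := fun x => ∑ i ∈ Finset.range l, (σ ^ i) x
  have hσT : ∀ x, σ (T x) = T x := by
    intro x
    have h1 : σ (T x) = ∑ i ∈ Finset.range l, (σ ^ (i+1)) x := by
      simp only [T, map_sum, pow_succ']
      rfl
    have h2 := Finset.sum_range_succ' (fun i => (σ ^ i) x) l
    have h3 := Finset.sum_range_succ (fun i => (σ ^ i) x) l
    have h4 : (σ ^ l) x = (σ ^ 0) x := by rw [← ho, pow_orderOf_eq_one, pow_zero]
    rw [h1]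
    rw [h3, h4] at h2
    exact (add_right_cancel h2).symm
  have hpow : ∀ (z : F), σ z = z → ∀ i : ℕ, (σ ^ i) z = z := by
    intro z hz i
    induction i with
    | zero => rfl
    | succ n ih => rw [pow_succ, AlgEquiv.mul_apply, hz, ih]
  set y := (l : F) * x - T x with hy
  have hy0 : y ≠ 0 := by
    intro h0
    have h1 : (l : F) * x = T x := sub_eq_zero.mp h0
    have h2 := hσT x
    rw [← h1, map_mul, map_natCast] at h2
    exact hx (mul_left_cancel₀ hl0 h2)
  have hTy : T y = 0 := by
    have h1 : T y = (l : F) * T x - ∑ i ∈ Finset.range l, (σ ^ i) (T x) := by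
      simp only [T] at hy ⊢
      rw [hy, Finset.mul_sum, ← Finset.sum_sub_distrib]
      refine Finset.sum_congr rfl fun i _ => ?_
      rw [map_sub, map_mul, map_natCast]
    rw [h1, Finset.sum_congr rfl (fun i _ => hpow _ (hσT x) i)]
    simp
  have hdiff : ∀ i : ℕ, v ((σ ^ i) y - y) < v y := by
    intro i
    induction i with
    | zero => simpa [zero_lt_iff] using hy0
    | succ n ih =>
      have h1 : (σ ^ (n+1)) y - y = σ ((σ ^ n) y - y) + (σ y - y) := by
        rw [pow_succ', AlgEquiv.mul_apply, map_sub σ]; ring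
      rw [h1]
      exact v.map_add_lt ((hinv _).trans_lt ih) (hσ y hy0)
  have h5 : v (∑ i ∈ Finset.range l, ((σ ^ i) y - y)) < v y :=
    v.map_sum_lt (by simpa using hy0) fun i _ => hdiff i
  rw [Finset.sum_sub_distrib] at h5
  change v (T y - _) < _ at h5
  rw [hTy, zero_sub, v.map_neg, Finset.sum_const, Finset.card_range, nsmul_eq_mul, map_mul, hv,
    one_mul] at h5
  exact lt_irrefl _ h5

theorem solvable_of_res [FiniteDimensional E F]
    (hinv : ∀ (σ : F ≃ₐ[E] F) x, v (σ x) = v x)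
    (hres : ∀ (σ : F ≃ₐ[E] F) x, v x ≤ 1 → v (σ x - x) < 1) : Group.IsSolvable (F ≃ₐ[E] F) := by
  have hle : ∀ (σ : F ≃ₐ[E] F) (x : Fˣ), v (σ (x : F) / x) ≤ 1 := by
    intro σ x
    have : v (x : F) ≠ 0 := by simp
    rw [map_div₀, hinv, div_self this]
  let χ : (F ≃ₐ[E] F) →* (Fˣ → ResidueField v.valuationSubring) :=
    { toFun := fun σ x => residue v.valuationSubring ⟨σ (x : F) / x, hle σ x⟩
      map_one' := by
        funext x
        have : (⟨(1 : F ≃ₐ[E] F) (x : F) / x, hle 1 x⟩ : v.valuationSubring) = 1 := by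
          apply Subtype.ext
          simp
        rw [this]; simp
      map_mul' := by
        intro σ τ
        funext x
        rw [Pi.mul_apply, ← map_mul, ← sub_eq_zero, ← map_sub, residue_eq_zero]
        have h1 : (σ * τ) (x : F) / x - (σ (x : F) / x) * (τ (x : F) / x)
          = (σ (x : F) / x) * (σ (τ (x : F) / x) - τ (x : F) / x) := by
          have h2 : σ (x : F) ≠ 0 := by simp
          have h3 : (x : F) ≠ 0 := by simp
          rw [AlgEquiv.mul_apply, map_div₀]
          field_simp
        change v ((σ * τ) (x : F) / x - (σ (x : F) / x) * (τ (x : F) / x)) < 1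
        rw [h1, map_mul]
        exact (mul_le_of_le_one_left' (hle σ x)).trans_lt (hres σ _ (hle τ x)) }
  have hker : ∀ σ ∈ χ.toHomUnits.ker, ∀ x, x ≠ 0 → v (σ x - x) < v x := by
    intro σ hσ x hx
    rw [MonoidHom.ker_toHomUnits, MonoidHom.mem_ker] at hσ
    have h1 := congrFun hσ (Units.mk0 x hx)
    have h2 : residue v.valuationSubring ⟨σ x / x, hle σ (Units.mk0 x hx)⟩ = 1 := h1
    rw [← sub_eq_zero, ← map_one (residue v.valuationSubring), ← map_sub, residue_eq_zero] at h2
    have h3 : v (σ x / x - 1) < 1 := h2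
    have h4 : σ x - x = x * (σ x / x - 1) := by field_simp
    rw [h4, map_mul]
    exact mul_lt_of_lt_one_right (by simpa [zero_lt_iff] using hx) h3
  have hprime : ∀ l : ℕ, l.Prime → l ∣ Nat.card χ.toHomUnits.ker → v (l : F) < 1 := by
    intro l hl hd
    have := Fact.mk hl
    obtain ⟨σ, hσ⟩ := exists_prime_orderOf_dvd_card' l hd
    exact wild_prime v σ.1 (hker σ.1 σ.2) (hinv σ.1) l hl (by rw [← hσ]; exact Subgroup.orderOf_coe σ)
  have hsolv : Group.IsSolvable χ.toHomUnits.ker := by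
    by_cases h1 : Nat.card χ.toHomUnits.ker = 1
    · have := (Nat.card_eq_one_iff_unique.mp h1).1
      infer_instance
    · obtain ⟨l, hl, hd⟩ := Nat.exists_prime_and_dvd h1
      have := Fact.mk hl
      have hcard := Nat.eq_prime_pow_of_unique_prime_dvd (n := Nat.card χ.toHomUnits.ker) (p := l)
        Nat.card_pos.ne' (by
          intro d hdp hdd
          by_contra hne
          have hco : Nat.Coprime d l := (Nat.coprime_primes hdp hl).mpr hne
          have hbez := Nat.isCoprime_iff_coprime.mpr hco
          obtain ⟨a, b, hab⟩ := hbez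
          have h2 : (a : F) * d + (b : F) * l = 1 := by exact_mod_cast congrArg (Int.cast (R := F)) hab
          have hint : ∀ a : ℤ, v (a : F) ≤ 1 := fun a => by
            have : (a : F) ∈ v.integer := intCast_mem _ _
            exact this
          have h3 : v ((a : F) * d + (b : F) * l) < 1 := by
            apply v.map_add_lt
            · rw [map_mul]; exact (mul_le_of_le_one_left' (hint a)).trans_lt (hprime d hdp hdd)
            · rw [map_mul]; exact (mul_le_of_le_one_left' (hint b)).trans_lt (hprime l hl hd)
          rw [h2, map_one] at h3
          exact lt_irrefl _ h3)
      have := (IsPGroup.of_card hcard).isNilpotent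
      infer_instance
  exact Group.isSolvable_of_ker_le_range χ.toHomUnits.ker.subtype χ.toHomUnits (by simp)
end
end CISub

namespace CISub
section
variable {E F Γ : Type*} [Field E] [Field F] [Algebra E F] [LinearOrderedCommGroupWithZero Γ]
  (v : Valuation F Γ)

theorem low_poly_top [FiniteDimensional E F] {l : ℕ} (hl : l.Prime) (hfin : Module.finrank E F = l)
    {α : F} (hα : α ∉ (algebraMap E F).range) :
    (minpoly E α).natDegree = l ∧ ∀ s, s ∈ IntermediateField.adjoin E {α} := by
  have hint : IsIntegral E α := Algebra.IsIntegral.isIntegral α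
  have h1 := IntermediateField.adjoin.finrank hint
  have h2 := Module.finrank_mul_finrank E (IntermediateField.adjoin E {α}) F
  rw [hfin] at h2
  have h3 : Module.finrank E (IntermediateField.adjoin E {α}) ∣ l := ⟨_, h2.symm⟩
  rcases (Nat.dvd_prime hl).mp h3 with h | h
  · exfalso
    rw [IntermediateField.finrank_eq_one_iff, IntermediateField.adjoin_simple_eq_bot_iff,
      IntermediateField.mem_bot] at h
    exact hα h
  · refine ⟨by rw [← h1, h], ?_⟩
    have : IntermediateField.adjoin E {α} = ⊤ := by
      apply IntermediateField.eq_of_le_of_finrank_eq le_top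
      rw [h, IntermediateField.finrank_top', hfin]
    intro s
    rw [this]; trivial

def Out (E : Type*) {F Γ : Type*} [Field E] [Field F] [Algebra E F]
    [LinearOrderedCommGroupWithZero Γ] (v : Valuation F Γ) (y : F) : Prop :=
  ∀ e : E, v y ≠ v (algebraMap E F e)

theorem Out.ne_zero {v : Valuation F Γ} {y : F} (h : Out E v y) : y ≠ 0 := by
  rintro rfl
  exact h 0 (by simp)

theorem Out.ne_one {v : Valuation F Γ} {y : F} (h : Out E v y) : v y ≠ 1 := by
  intro h1
  exact h 1 (by simp [h1])

theorem exists_norm [FiniteDimensional E F] [IsGalois E F]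
    (hinv : ∀ (σ : F ≃ₐ[E] F) x, v (σ x) = v x) (y : F) :
    ∃ n : E, v (algebraMap E F n) = v y ^ Module.finrank E F := by
  refine ⟨Algebra.norm E y, ?_⟩
  rw [Algebra.norm_eq_prod_automorphisms, map_prod]
  simp only [hinv]
  rw [Finset.prod_const, Finset.card_univ, ← Nat.card_eq_fintype_card, IsGalois.card_aut_eq_finrank]

theorem ram_pow [FiniteDimensional E F] [IsGalois E F]
    (hinv : ∀ (σ : F ≃ₐ[E] F) x, v (σ x) = v x) {l : ℕ} (hl : l.Prime)
    (hfin : Module.finrank E F = l) {y : F} (hy : Out E v y) (i : ℕ) (hi0 : 0 < i) (hil : i < l)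
    (c : E) (hc : c ≠ 0) : Out E v (algebraMap E F c * y ^ i) := by
  intro e he
  obtain ⟨n, hn⟩ := exists_norm v hinv y
  rw [hfin] at hn
  have hco : Nat.Coprime i l := Nat.Coprime.symm
    ((Nat.Prime.coprime_iff_not_dvd hl).mpr (Nat.not_dvd_of_pos_of_lt hi0 hil))
  obtain ⟨a, b, hab⟩ := Nat.isCoprime_iff_coprime.mpr hco
  have hy0 : v y ≠ 0 := by simpa using hy.ne_zero
  have h1 : v y ^ i = v (algebraMap E F (e / c)) := by
    rw [map_div₀, map_div₀, ← he, map_mul, map_pow]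
    have hc1 : v (algebraMap E F c) ≠ 0 := by simpa using hc
    rw [mul_div_cancel_left₀ _ hc1]
  apply hy ((e / c) ^ a * n ^ b)
  rw [map_mul, map_mul, map_zpow₀, map_zpow₀, map_zpow₀, map_zpow₀, ← h1, hn, ← zpow_natCast,
    ← zpow_natCast, ← zpow_mul, ← zpow_mul, ← zpow_add₀ hy0, mul_comm (i : ℤ), mul_comm (l : ℤ), hab, zpow_one]

theorem term_le [FiniteDimensional E F] [IsGalois E F]
    (hinv : ∀ (σ : F ≃ₐ[E] F) x, v (σ x) = v x) {l : ℕ} (hl : l.Prime)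
    (hfin : Module.finrank E F = l) {y : F} (hy : Out E v y) (g : E[X]) (hg : g.natDegree < l)
    (i : ℕ) : v (algebraMap E F (g.coeff i) * y ^ i) ≤ v (aeval y g) := by
  by_cases hg0 : g = 0
  · simp [hg0]
  obtain ⟨j, hj, hmax⟩ := Finset.exists_max_image g.support
    (fun i => v (algebraMap E F (g.coeff i) * y ^ i)) (by simpa using hg0)
  have hjc : g.coeff j ≠ 0 := mem_support_iff.mp hj
  have hlow : ∀ k ∈ g.support, k < l := fun k hk => (le_natDegree_of_mem_supp _ hk).trans_lt hg
  have hy0 : v y ≠ 0 := by simpa using hy.ne_zero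
  have hdist : ∀ a b : ℕ, a < b → a ∈ g.support → b ∈ g.support →
      v (algebraMap E F (g.coeff a) * y ^ a) ≠ v (algebraMap E F (g.coeff b) * y ^ b) := by
    intro a b hab ha hb h
    refine ram_pow v hinv hl hfin hy (b - a) (by omega) (by have := hlow b hb; omega)
      (g.coeff b) (mem_support_iff.mp hb) (g.coeff a) ?_
    have h2 : y ^ b = y ^ (b - a) * y ^ a := by rw [← pow_add]; congr 1; omega
    rw [h2, ← mul_assoc, map_mul v, map_mul v _ (y ^ a)] at h
    exact (mul_right_cancel₀ (by simpa using fun h => absurd h hy.ne_zero) h).symm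
  have hlt : ∀ k ∈ g.support \ {j}, v (algebraMap E F (g.coeff k) * y ^ k) <
      v (algebraMap E F (g.coeff j) * y ^ j) := by
    intro k hk
    rw [Finset.mem_sdiff, Finset.mem_singleton] at hk
    refine lt_of_le_of_ne (hmax k hk.1) ?_
    rcases lt_or_gt_of_ne hk.2 with h | h
    · exact hdist k j h hk.1 hj
    · exact (hdist j k h hj hk.1).symm
  have hsum : v (aeval y g) = v (algebraMap E F (g.coeff j) * y ^ j) := by
    rw [aeval_eq_sum_range' (n := g.natDegree + 1) (by omega)]
    have : ∑ i ∈ Finset.range (g.natDegree + 1), g.coeff i • y ^ i =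
        ∑ i ∈ g.support, algebraMap E F (g.coeff i) * y ^ i := by
      simp only [Algebra.smul_def]
      symm
      apply Finset.sum_subset
      · intro k hk
        rw [Finset.mem_range]
        have := le_natDegree_of_mem_supp _ hk
        omega
      · intro k _ hk
        simp [notMem_support_iff.mp hk]
    rw [this]
    exact Valuation.map_sum_eq_of_lt v hj hlt
  rw [hsum]
  by_cases hi : i ∈ g.support
  · exact hmax i hi
  · simp [notMem_support_iff.mp hi]

theorem ram_case [FiniteDimensional E F] [IsGalois E F]
    (hinv : ∀ (σ : F ≃ₐ[E] F) x, v (σ x) = v x) {l : ℕ} (hl : l.Prime)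
    (hfin : Module.finrank E F = l) {y : F} (hy : Out E v y) (hy1 : v y < 1)
    (S : Finset F) (hS : ∀ s ∈ S, v s ≤ 1) :
    ∃ α : F, v α ≤ 1 ∧ ∀ s ∈ S, MonoIn E v α s := by
  classical
  have hout : ∀ j, 0 < j → j < l → Out E v (y ^ j) := by
    intro j h0 h1
    simpa using ram_pow v hinv hl hfin hy j h0 h1 1 one_ne_zero
  have hG : ∀ (j : ℕ) (s : F), ∃ g : E[X], 0 < j → j < l → (aeval (y ^ j) g = s ∧ g.natDegree < l) := by
    intro j s
    by_cases hj : 0 < j ∧ j < l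
    · have h1 : y ^ j ∉ (algebraMap E F).range := by
        rintro ⟨e, he⟩
        exact hout j hj.1 hj.2 e (by rw [he])
      obtain ⟨h2, h3⟩ := low_poly_top hl hfin h1
      obtain ⟨g, h4, h5⟩ := exists_low_poly (Algebra.IsIntegral.isIntegral (y ^ j)) (h3 s)
      exact ⟨g, fun _ _ => ⟨h4, h2 ▸ h5⟩⟩
    · exact ⟨0, fun h h' => absurd ⟨h, h'⟩ hj⟩
  choose G hG using hG
  let zz : F × ℕ × ℕ → F := fun t => algebraMap E F ((G t.2.1 t.1).coeff t.2.2) * (y ^ t.2.1) ^ t.2.2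
  let I : Finset (F × ℕ × ℕ) := S ×ˢ (Finset.range l ×ˢ Finset.range l)
  let cnt : Γ → F × ℕ × ℕ → ℕ := fun a t => ((Finset.range (l+1)).filter (fun m => v (zz t) ≤ a ^ m)).card
  let Φ : Γ → ℕ := fun a => ∑ t ∈ I, cnt a t
  let N : ℕ := ∑ t ∈ I, (l + 1)
  have hΦN : ∀ a, Φ a ≤ N := by
    intro a
    refine Finset.sum_le_sum fun t _ => ?_
    refine (Finset.card_filter_le _ _).trans (by simp)
  let P : Set (E × ℕ) := {q | 0 < q.2 ∧ q.2 < l ∧ q.1 ≠ 0 ∧ v (algebraMap E F q.1 * y ^ q.2) < 1}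
  let val : E × ℕ → Γ := fun q => v (algebraMap E F q.1 * y ^ q.2)
  obtain ⟨⟨c, j⟩, ⟨hj0, hjl, hc, hlt⟩, hmin⟩ := (measure (fun q : E × ℕ => N - Φ (val q))).wf.has_min P
    ⟨(1, 1), by refine ⟨Nat.one_pos, hl.one_lt, one_ne_zero, by simpa using hy1⟩⟩
  have hmax : ∀ q ∈ P, Φ (val q) ≤ Φ (val (c, j)) := by
    intro q hq
    have h := hmin q hq
    have h' : ¬ (N - Φ (val q) < N - Φ (val (c, j))) := h
    have h1 := hΦN (val q)
    have h2 := hΦN (val (c, j))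
    omega
  have hcls : ∀ (e : E) (n : ℕ), Out E v (algebraMap E F e * y ^ n) →
      v (algebraMap E F e * y ^ n) < 1 → ∃ q ∈ P, val q = v (algebraMap E F e * y ^ n) := by
    intro e n ho h1
    obtain ⟨nn, hnn⟩ := exists_norm v hinv y
    rw [hfin] at hnn
    have he : e ≠ 0 := by
      rintro rfl
      exact ho.ne_zero (by simp)
    have hnn0 : nn ≠ 0 := by
      rintro rfl
      rw [map_zero, map_zero] at hnn
      exact hy.ne_zero (by simpa using (pow_eq_zero_iff hl.ne_zero).mp hnn.symm)
    have hval : v (algebraMap E F (e * nn ^ (n / l)) * y ^ (n % l)) = v (algebraMap E F e * y ^ n) := by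
      conv_rhs => rw [← Nat.div_add_mod n l, pow_add, pow_mul]
      simp only [map_mul, map_pow, hnn, mul_assoc]
    refine ⟨(e * nn ^ (n / l), n % l), ⟨?_, Nat.mod_lt _ hl.pos, ?_, ?_⟩, hval⟩
    · rw [Nat.pos_iff_ne_zero]
      intro h0
      change n % l = 0 at h0
      rw [h0, pow_zero, mul_one] at hval
      exact ho _ hval.symm
    · exact mul_ne_zero he (pow_ne_zero _ hnn0)
    · change v (algebraMap E F (e * nn ^ (n / l)) * y ^ (n % l)) < 1
      rwa [hval]
  set α := algebraMap E F c * y ^ j with hα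
  have hαout : Out E v α := ram_pow v hinv hl hfin hy j hj0 hjl c hc
  have hα0 : v α ≠ 0 := by simpa using hαout.ne_zero
  refine ⟨α, hlt.le, fun s hs => ?_⟩
  obtain ⟨hg, hgd⟩ := hG j s hj0 hjl
  have hcF : algebraMap E F c ≠ 0 := by simpa using hc
  refine ⟨(G j s).comp (C c⁻¹ * X), fun i => ?_, ?_⟩
  swap
  · rw [aeval_comp, map_mul, aeval_C, aeval_X, hα, map_inv₀, inv_mul_cancel_left₀ hcF, hg]
  rw [comp_C_mul_X_coeff]
  by_contra hbad
  push Not at hbad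
  set e := (G j s).coeff i * c⁻¹ ^ i with he
  have hz : zz (s, j, i) = algebraMap E F e * α ^ i := by
    simp only [zz, he, hα, map_mul, map_pow, map_inv₀, mul_pow, inv_pow]
    have := pow_ne_zero i hcF
    field_simp
  have hzle : v (zz (s, j, i)) ≤ 1 := by
    refine le_trans ?_ (hS s hs)
    have := term_le v hinv hl hfin (hout j hj0 hjl) (G j s) hgd i
    rwa [hg] at this
  have he0 : e ≠ 0 := by
    intro h0
    simp [h0] at hbad
  have hil : i < l := by
    by_contra hcon
    apply he0
    rw [he, coeff_eq_zero_of_natDegree_lt (by omega), zero_mul]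
  clear_value e
  have hex : ∃ n, ¬ v (zz (s, j, i)) ≤ v α ^ n := by
    refine ⟨i, ?_⟩
    rw [hz, map_mul, map_pow, not_le]
    exact lt_mul_of_one_lt_left (zero_lt_iff.mpr (pow_ne_zero _ hα0)) hbad
  obtain ⟨n, hn, hnmin⟩ : ∃ n, ¬ v (zz (s, j, i)) ≤ v α ^ n ∧ ∀ m < n, v (zz (s, j, i)) ≤ v α ^ m :=
    ⟨Nat.find hex, Nat.find_spec hex, fun m hm => not_not.mp (Nat.find_min hex hm)⟩
  have hni : n ≤ i := by
    by_contra hcon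
    have := hnmin i (by omega)
    rw [hz, map_mul, map_pow] at this
    exact absurd this (not_le.mpr (lt_mul_of_one_lt_left (zero_lt_iff.mpr (pow_ne_zero _ hα0)) hbad))
  have hn0 : n ≠ 0 := by
    rintro rfl
    exact hn (by simpa using hzle)
  obtain ⟨m, rfl⟩ := Nat.exists_eq_succ_of_ne_zero hn0
  have hm := hnmin m (by omega)
  have hz' : v (zz (s, j, i)) = v α ^ m * v (algebraMap E F e * α ^ (i - m)) := by
    rw [hz, ← map_pow, ← map_mul v (α ^ m), mul_left_comm, ← pow_add]
    congr 3; omega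
  have hout' : Out E v (algebraMap E F e * α ^ (i - m)) :=
    ram_pow v hinv hl hfin hαout (i - m) (by omega) (by omega) e he0
  have hform : algebraMap E F e * α ^ (i - m) = algebraMap E F (e * c ^ (i - m)) * y ^ (j * (i - m)) := by
    rw [hα, mul_pow, ← pow_mul, map_mul, map_pow, mul_assoc]
  have hlt1 : v (algebraMap E F e * α ^ (i - m)) < 1 := by
    refine lt_of_le_of_ne ?_ hout'.ne_one
    rw [hz'] at hm
    exact (mul_le_iff_le_one_right (zero_lt_iff.mpr (pow_ne_zero _ hα0))).mp hm
  have hgt : v α < v (algebraMap E F e * α ^ (i - m)) := by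
    rw [not_le, hz', pow_succ] at hn
    exact lt_of_mul_lt_mul_left' hn
  obtain ⟨q, hq, hqv⟩ := hcls _ _ (hform ▸ hout') (hform ▸ hlt1)
  rw [← hform] at hqv
  have hcontra := hmax q hq
  refine absurd hcontra (not_le.mpr ?_)
  have hvalα : val (c, j) = v α := rfl
  rw [hvalα, hqv]
  have hsub : ∀ t, ((Finset.range (l+1)).filter (fun m => v (zz t) ≤ v α ^ m)) ⊆
      ((Finset.range (l+1)).filter (fun k => v (zz t) ≤ v (algebraMap E F e * α ^ (i - m)) ^ k)) := by
    intro t k hk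
    rw [Finset.mem_filter] at hk ⊢
    exact ⟨hk.1, hk.2.trans (pow_le_pow_left' hgt.le k)⟩
  refine Finset.sum_lt_sum (fun t _ => Finset.card_le_card (hsub t)) ⟨(s, j, i), ?_, ?_⟩
  · simp only [I, Finset.mem_product, Finset.mem_range]
    exact ⟨hs, hjl, hil⟩
  · apply Finset.card_lt_card
    refine ⟨hsub _, fun hcon => ?_⟩
    have : m + 1 ∈ (Finset.range (l+1)).filter
      (fun k => v (zz (s, j, i)) ≤ v (algebraMap E F e * α ^ (i - m)) ^ k) := by
      rw [Finset.mem_filter, Finset.mem_range]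
      refine ⟨by omega, ?_⟩
      rw [hz', pow_succ]
      exact mul_le_mul_left (pow_le_pow_left' hgt.le m) _
    exact hn (Finset.mem_filter.mp (hcon this)).2
end
end CISub

namespace CISub
section
variable {E F Γ : Type*} [Field E] [Field F] [Algebra E F] [LinearOrderedCommGroupWithZero Γ]
  (v : Valuation F Γ)
open IsLocalRing

theorem sigma_lt (hres : ∀ (σ : F ≃ₐ[E] F) x, v x ≤ 1 → v (σ x - x) < 1)
    (hno : ∀ y : F, ∃ e : E, v y = v (algebraMap E F e)) {x : F} (hx : x ∉ (algebraMap E F).range)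
    (a : E) (σ : F ≃ₐ[E] F) : v (σ x - x) < v (x - algebraMap E F a) := by
  have hy : x - algebraMap E F a ≠ 0 := fun h => hx ⟨a, (sub_eq_zero.mp h).symm⟩
  obtain ⟨c, hc⟩ := hno (x - algebraMap E F a)
  have hc0 : v (algebraMap E F c) ≠ 0 := by rw [← hc]; simpa using hy
  have hz : v ((x - algebraMap E F a) / algebraMap E F c) ≤ 1 := by
    rw [map_div₀, hc, div_self hc0]
  have h := hres σ _ hz
  rw [map_div₀, map_sub σ, AlgEquiv.commutes, AlgEquiv.commutes, ← sub_div, sub_sub_sub_cancel_right,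
    map_div₀, div_lt_one₀ (zero_lt_iff.mpr hc0), ← hc] at h
  exact h

theorem l_lt [FiniteDimensional E F] [IsGalois E F]
    (hres : ∀ (σ : F ≃ₐ[E] F) x, v x ≤ 1 → v (σ x - x) < 1)
    (hno : ∀ y : F, ∃ e : E, v y = v (algebraMap E F e)) {x : F} (hx : x ∉ (algebraMap E F).range) :
    v (Module.finrank E F : F) < 1 := by
  by_contra hcon
  have h1 : v (Module.finrank E F : F) = 1 := le_antisymm (natCast_le_one v _) (not_lt.mp hcon)
  set l := Module.finrank E F with hl
  have hl0 : (l : F) ≠ 0 := by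
    intro h
    rw [h, map_zero] at h1
    exact zero_ne_one h1
  have hy : x - algebraMap E F (Algebra.trace E F x / l) ≠ 0 := fun h => hx ⟨_, (sub_eq_zero.mp h).symm⟩
  have h2 : (l : F) * (x - algebraMap E F (Algebra.trace E F x / l)) = ∑ σ : F ≃ₐ[E] F, (x - σ x) := by
    rw [Finset.sum_sub_distrib, Finset.sum_const, Finset.card_univ, ← Nat.card_eq_fintype_card,
      IsGalois.card_aut_eq_finrank, ← hl, ← trace_eq_sum_automorphisms, map_div₀, map_natCast]
    field_simp
    ring
  have h3 : v (x - algebraMap E F (Algebra.trace E F x / l)) = v (∑ σ : F ≃ₐ[E] F, (x - σ x)) := by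
    rw [← h2, map_mul, h1, one_mul]
  have h4 : v (∑ σ : F ≃ₐ[E] F, (x - σ x)) < v (x - algebraMap E F (Algebra.trace E F x / l)) := by
    refine v.map_sum_lt (by simpa using hy) fun σ _ => ?_
    rw [Valuation.map_sub_swap]
    exact sigma_lt v hres hno hx _ σ
  exact absurd h4 (by rw [h3]; exact lt_irrefl _)

theorem nat_unit {l : ℕ} (hl : l.Prime) (hv : v (l : F) < 1) (k : ℕ) (hk : 0 < k) (hkl : k < l) :
    v (k : F) = 1 := by
  refine le_antisymm (natCast_le_one v _) (not_lt.mp fun hlt => ?_)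
  have hco : Nat.Coprime k l := Nat.Coprime.symm
    ((Nat.Prime.coprime_iff_not_dvd hl).mpr (Nat.not_dvd_of_pos_of_lt hk hkl))
  obtain ⟨a, b, hab⟩ := Nat.isCoprime_iff_coprime.mpr hco
  have hi : ∀ a : ℤ, v (a : F) ≤ 1 := by
    intro a
    cases a with
    | ofNat n => simpa using natCast_le_one v n
    | negSucc n =>
      rw [Int.cast_negSucc, Valuation.map_neg]
      exact natCast_le_one v _
  have h1 : v ((a : F) * k + b * l) = 1 := by
    have : ((a : F) * k + b * l) = 1 := by exact_mod_cast congrArg (Int.cast : ℤ → F) hab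
    rw [this, map_one]
  refine absurd (v.map_add_lt (g := 1) ?_ ?_) (by rw [h1]; exact lt_irrefl _)
  · rw [map_mul]; exact (mul_le_of_le_one_left' (hi a)).trans_lt hlt
  · rw [map_mul]; exact (mul_le_of_le_one_left' (hi b)).trans_lt hv

theorem best_case [FiniteDimensional E F] [IsGalois E F]
    (hinv : ∀ (σ : F ≃ₐ[E] F) x, v (σ x) = v x)
    (hres : ∀ (σ : F ≃ₐ[E] F) x, v x ≤ 1 → v (σ x - x) < 1)
    (hno : ∀ y : F, ∃ e : E, v y = v (algebraMap E F e)) {l : ℕ} (hl : l.Prime)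
    (hfin : Module.finrank E F = l) {x : F} (hx : x ∉ (algebraMap E F).range)
    (a : E) (ha : ∀ a' : E, v (x - algebraMap E F a) ≤ v (x - algebraMap E F a')) :
    ∃ α : F, v α ≤ 1 ∧ ∀ s, v s ≤ 1 → MonoIn E v α s := by
  have hlv := l_lt v hres hno hx
  rw [hfin] at hlv
  have hy : x - algebraMap E F a ≠ 0 := fun h => hx ⟨a, (sub_eq_zero.mp h).symm⟩
  obtain ⟨c, hc⟩ := hno (x - algebraMap E F a)
  have hc0 : v (algebraMap E F c) ≠ 0 := by rw [← hc]; simpa using hy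
  have hcF : algebraMap E F c ≠ 0 := by simpa using hc0
  obtain ⟨α, hα⟩ : ∃ α, α = (x - algebraMap E F a) / algebraMap E F c := ⟨_, rfl⟩
  have hα1 : v α = 1 := by rw [hα, map_div₀, hc, div_self hc0]
  have hfar : ∀ e : E, ¬ v (α - algebraMap E F e) < 1 := by
    intro e he
    have h1 : x - algebraMap E F (a + c * e) = algebraMap E F c * (α - algebraMap E F e) := by
      rw [hα, map_add, map_mul]; field_simp; ring
    have h2 := ha (a + c * e)
    rw [h1, map_mul, hc] at h2
    exact absurd h2 (not_le.mpr (mul_lt_of_lt_one_right (zero_lt_iff.mpr hc0) he))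
  have hαE : α ∉ (algebraMap E F).range := by
    rintro ⟨e, he⟩
    apply hfar e
    rw [he, sub_self, map_zero]
    exact zero_lt_one
  obtain ⟨hdeg, htop⟩ := low_poly_top hl hfin hαE
  refine ⟨α, hα1.le, fun s hs => mono_of_indep v (Algebra.IsIntegral.isIntegral α)
    (indep_of_residue v hα1.le ?_) (htop s) hs⟩
  rw [hdeg]
  have hlp : Fact l.Prime := ⟨hl⟩
  set kE := ResidueField (O E v)
  set kF := ResidueField v.valuationSubring
  have hl0 : ((l : ℕ) : kF) = 0 := by
    have : ((l : ℕ) : kF) = residue _ (l : v.valuationSubring) := by simp [kF]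
    rw [this, residue_eq_zero]
    simpa using hlv
  have hchar : CharP kF l := by
    obtain ⟨q, hq⟩ := CharP.exists kF
    have h1 := (CharP.cast_eq_zero_iff kF q l).mp hl0
    rcases (Nat.dvd_prime hl).mp h1 with h | h
    · exact absurd h (CharP.char_ne_one kF q)
    · rwa [h] at hq
  obtain ⟨n, hn⟩ : ∃ n : E, n = Algebra.norm E α := ⟨_, rfl⟩
  have hnF : algebraMap E F n = ∏ σ : F ≃ₐ[E] F, σ α := by
    rw [hn, Algebra.norm_eq_prod_automorphisms]
  have hn1 : v (algebraMap E F n) ≤ 1 := by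
    rw [hnF, map_prod]
    exact Finset.prod_le_one' fun σ _ => by rw [hinv, hα1]
  let nO : O E v := ⟨n, hn1⟩
  let αO : v.valuationSubring := ⟨α, hα1.le⟩
  have hpow : (residue _ αO) ^ l = algebraMap kE kF (residue _ nO) := by
    have h1 : algebraMap kE kF (residue _ nO) = residue _ (algebraMap (O E v) v.valuationSubring nO) := rfl
    have h2 : algebraMap (O E v) v.valuationSubring nO =
        ∏ σ : F ≃ₐ[E] F, (⟨σ α, (hinv σ α).trans_le hα1.le⟩ : v.valuationSubring) := by
      apply Subtype.ext
      rw [SubmonoidClass.coe_finsetProd]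
      exact hnF
    rw [h1, h2, map_prod]
    have h3 : ∀ σ : F ≃ₐ[E] F, residue _ (⟨σ α, (hinv σ α).trans_le hα1.le⟩ : v.valuationSubring) =
        residue _ αO := by
      intro σ
      rw [← sub_eq_zero, ← map_sub, residue_eq_zero]
      exact hres σ α hα1.le
    simp only [h3]
    rw [Finset.prod_const, Finset.card_univ, ← Nat.card_eq_fintype_card, IsGalois.card_aut_eq_finrank,
      hfin]
  have hirr : Irreducible (X ^ l - C (residue _ nO) : kE[X]) := by
    apply X_pow_sub_C_irreducible_of_prime hl
    intro b hb
    have h1 : (residue _ αO - algebraMap kE kF b) ^ l = 0 := by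
      rw [sub_pow_char, hpow, ← hb, map_pow, sub_self]
    have h2 := pow_eq_zero_iff hl.ne_zero |>.mp h1
    obtain ⟨bO, rfl⟩ := residue_surjective b
    have h4 : residue _ (αO - algebraMap (O E v) v.valuationSubring bO) = 0 := by
      rw [map_sub]; exact h2
    rw [residue_eq_zero] at h4
    exact hfar bO h4
  have hmin : minpoly kE (residue _ αO) = X ^ l - C (residue _ nO) := by
    symm
    apply minpoly.eq_of_irreducible_of_monic hirr
    · simp only [map_sub, map_pow, aeval_X, aeval_C]; exact sub_eq_zero.mpr hpow
    · exact monic_X_pow_sub_C _ hl.ne_zero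
  change l ≤ (minpoly kE (residue _ αO)).natDegree
  rw [hmin, natDegree_X_pow_sub_C]
end
end CISub

namespace CISub
section
variable {E F Γ : Type*} [Field E] [Field F] [Algebra E F] [LinearOrderedCommGroupWithZero Γ]
  (v : Valuation F Γ)

theorem poly_lt {R Γ : Type*} [CommRing R] [LinearOrderedCommGroupWithZero Γ] (v : Valuation R Γ)
    (g : R[X]) (hg : ∀ i, v (g.coeff i) < 1) (b : R) (hb : v b ≤ 1) : v (g.eval b) < 1 := by
  rw [eval_eq_sum_range]
  refine v.map_sum_lt one_ne_zero fun i _ => ?_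
  rw [map_mul, map_pow]
  exact (mul_le_of_le_one_right' (pow_le_one' hb i)).trans_lt (hg i)

/-- `g` is eventually dominated by its value. -/
def St (v : Valuation F Γ) (x : F) (g : E[X]) : Prop :=
  ∃ a0 : E, ∀ a : E, v (x - algebraMap E F a) ≤ v (x - algebraMap E F a0) → ∀ k, 0 < k →
    v (algebraMap E F ((taylor a g).coeff k)) * v (x - algebraMap E F a) ^ k <
      v (algebraMap E F (g.eval a))

theorem St.mul {x : F} {g h : E[X]} (hg : St v x g) (hh : St v x h) : St v x (g * h) := by
  obtain ⟨a1, h1⟩ := hg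
  obtain ⟨a2, h2⟩ := hh
  obtain ⟨a0, h01, h02⟩ : ∃ a0 : E, v (x - algebraMap E F a0) ≤ v (x - algebraMap E F a1) ∧
      v (x - algebraMap E F a0) ≤ v (x - algebraMap E F a2) := by
    rcases le_total (v (x - algebraMap E F a1)) (v (x - algebraMap E F a2)) with h | h
    · exact ⟨a1, le_rfl, h⟩
    · exact ⟨a2, h, le_rfl⟩
  refine ⟨a0, fun a ha k hk => ?_⟩
  have hg := h1 a (ha.trans h01)
  have hh := h2 a (ha.trans h02)
  have hg0 : 0 < v (algebraMap E F (g.eval a)) := lt_of_le_of_lt zero_le (hg 1 Nat.one_pos)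
  have hh0 : 0 < v (algebraMap E F (h.eval a)) := lt_of_le_of_lt zero_le (hh 1 Nat.one_pos)
  have hg' : ∀ k, v (algebraMap E F ((taylor a g).coeff k)) * v (x - algebraMap E F a) ^ k ≤
      v (algebraMap E F (g.eval a)) := by
    intro k
    rcases Nat.eq_zero_or_pos k with rfl | h
    · simp [taylor_coeff_zero]
    · exact (hg k h).le
  have hh' : ∀ k, v (algebraMap E F ((taylor a h).coeff k)) * v (x - algebraMap E F a) ^ k ≤
      v (algebraMap E F (h.eval a)) := by
    intro k
    rcases Nat.eq_zero_or_pos k with rfl | h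
    · simp [taylor_coeff_zero]
    · exact (hh k h).le
  rw [taylor_mul, coeff_mul, ← map_pow, ← map_mul, map_sum, Finset.sum_mul, eval_mul, map_mul, map_mul]
  refine v.map_sum_lt (mul_ne_zero hg0.ne' hh0.ne') fun p hp => ?_
  rw [Finset.HasAntidiagonal.mem_antidiagonal] at hp
  rw [← hp, pow_add, map_mul (algebraMap E F), mul_mul_mul_comm, map_mul v, map_mul v _ (_ ^ p.1),
    map_mul v _ (_ ^ p.2), map_pow, map_pow]
  rcases Nat.eq_zero_or_pos p.1 with h | h
  · have h3 : 0 < p.2 := by omega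
    exact (mul_le_mul_left (hg' p.1) _).trans_lt ((mul_lt_mul_iff_right₀ hg0).mpr (hh p.2 h3))
  · exact (mul_le_mul_right (hh' p.2) _).trans_lt ((mul_lt_mul_iff_left₀ hh0).mpr (hg p.1 h))

theorem St.C {x : F} {c : E} (hc : c ≠ 0) : St v x (C c) := by
  refine ⟨0, fun a _ k hk => ?_⟩
  rw [taylor_C, coeff_C_of_ne_zero hk.ne']
  simp [zero_lt_iff, hc]

theorem St.lin {x : F} (hb : ∀ a : E, ∃ a' : E, v (x - algebraMap E F a') < v (x - algebraMap E F a))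
    (z : E) : St v x (X - Polynomial.C z) := by
  obtain ⟨a0, h0⟩ := hb z
  refine ⟨a0, fun a ha k hk => ?_⟩
  have h1 : v (algebraMap E F a - algebraMap E F z) = v (x - algebraMap E F z) := by
    have : algebraMap E F a - algebraMap E F z = (x - algebraMap E F z) - (x - algebraMap E F a) := by ring
    rw [this, Valuation.map_sub_swap]
    exact Valuation.map_sub_eq_of_lt_right v (ha.trans_lt h0)
  have h2 : taylor a (X - Polynomial.C z) = X + Polynomial.C (a - z) := by simp [taylor_apply]; ring
  rw [eval_sub, eval_X, eval_C, map_sub (algebraMap E F), h1, h2, coeff_add, coeff_C_of_ne_zero hk.ne',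
    add_zero, coeff_X]
  split_ifs with hk1
  · subst hk1
    simpa using ha.trans_lt h0
  · simpa using lt_of_le_of_lt zero_le h0

theorem taylor_der (a : E) (g : E[X]) (k : ℕ) :
    (taylor a (derivative g)).coeff k = (taylor a g).coeff (k + 1) * (k + 1) := by
  rw [← coeff_derivative]
  congr 1
  simp [taylor_apply, derivative_comp]

theorem St.all {l : ℕ} (hl : ∀ k : ℕ, 0 < k → k < l → v (k : F) = 1) {x : F}
    (hens : HensVal (v.comap (algebraMap E F)))
    (hno : ∀ y : F, ∃ e : E, v y = v (algebraMap E F e))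
    (hb : ∀ a : E, ∃ a' : E, v (x - algebraMap E F a') < v (x - algebraMap E F a)) (m : ℕ) :
    ∀ g : E[X], g ≠ 0 → g.natDegree < l → g.natDegree ≤ m → St v x g := by
  induction m with
  | zero =>
    intro g hg _ h0
    rw [eq_C_of_natDegree_le_zero h0] at hg ⊢
    exact St.C v (by simpa using hg)
  | succ m ih =>
    intro g hg hgl hgm
    by_cases hgm' : g.natDegree ≤ m
    · exact ih g hg hgl hgm'
    have hdeg : g.natDegree = m + 1 := by omega
    have hm1 : ((m + 1 : ℕ) : E) ≠ 0 := by
      intro h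
      have h1 := hl (m + 1) (by omega) (by omega)
      have h2 : ((m + 1 : ℕ) : F) = algebraMap E F ((m + 1 : ℕ) : E) := by simp
      rw [h2, h] at h1
      simp at h1
    have hg'0 : derivative g ≠ 0 := by
      intro h
      have h1 : (derivative g).coeff m = 0 := by rw [h, coeff_zero]
      rw [coeff_derivative, ← hdeg] at h1
      have h2 : g.coeff g.natDegree ≠ 0 := by simpa using hg
      push_cast at hm1
      exact (mul_ne_zero h2 hm1) h1
    have hg'd : (derivative g).natDegree ≤ m := by
      have := natDegree_derivative_le g
      omega
    obtain ⟨a0, h0⟩ := ih (derivative g) hg'0 (by omega) hg'd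
    have hd : ∀ a : E, v (x - algebraMap E F a) ≠ 0 := by
      intro a
      obtain ⟨a', h'⟩ := hb a
      exact (lt_of_le_of_lt zero_le h').ne'
    have hhi : ∀ a : E, v (x - algebraMap E F a) ≤ v (x - algebraMap E F a0) → ∀ k, 1 < k →
        v (algebraMap E F ((taylor a g).coeff k)) * v (x - algebraMap E F a) ^ k <
          v (algebraMap E F (eval a (derivative g))) * v (x - algebraMap E F a) := by
      intro a ha k hk
      obtain ⟨k, rfl⟩ : ∃ j, k = j + 1 := ⟨k - 1, by omega⟩
      have h1 := h0 a ha k (by omega)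
      rw [taylor_der] at h1
      rw [pow_succ, ← mul_assoc]
      refine (mul_lt_mul_iff_left₀ (zero_lt_iff.mpr (hd a))).mpr ?_
      by_cases hkl : k + 1 < l
      · have h2 := hl (k + 1) (by omega) hkl
        rw [map_mul, map_mul, map_add, map_natCast, map_one] at h1
        push_cast at h2
        rwa [h2, mul_one] at h1
      · rw [coeff_eq_zero_of_natDegree_lt (by rw [natDegree_taylor]; omega), map_zero, map_zero, zero_mul]
        exact lt_of_le_of_lt zero_le h1
    by_cases hA : ∃ a1 : E, ∀ a : E, v (x - algebraMap E F a) ≤ v (x - algebraMap E F a1) →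
        v (algebraMap E F (eval a (derivative g))) * v (x - algebraMap E F a) < v (algebraMap E F (eval a g))
    · obtain ⟨a1, h1⟩ := hA
      obtain ⟨a2, h20, h21⟩ : ∃ a2 : E, v (x - algebraMap E F a2) ≤ v (x - algebraMap E F a0) ∧
          v (x - algebraMap E F a2) ≤ v (x - algebraMap E F a1) := by
        rcases le_total (v (x - algebraMap E F a0)) (v (x - algebraMap E F a1)) with h | h
        · exact ⟨a0, le_rfl, h⟩
        · exact ⟨a1, h, le_rfl⟩
      refine ⟨a2, fun a ha k hk => ?_⟩
      have h3 := h1 a (ha.trans h21)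
      rcases Nat.lt_or_ge 1 k with hk1 | hk1
      · exact (hhi a (ha.trans h20) k hk1).trans h3
      · obtain rfl : k = 1 := by omega
        rwa [taylor_coeff_one, pow_one]
    · push Not at hA
      obtain ⟨a, ha, hle⟩ := hA a0
      obtain ⟨c, hc⟩ := hno (x - algebraMap E F a)
      have hca : v (algebraMap E F c) ≠ 0 := by rw [← hc]; exact hd a
      have hc0 : c ≠ 0 := by simpa using hca
      have hgk := hhi a ha
      have hga : v (algebraMap E F (eval a (derivative g))) ≠ 0 :=
        (lt_of_le_of_lt zero_le (h0 a ha 1 Nat.one_pos)).ne'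
      have hga0 : eval a (derivative g) ≠ 0 := by simpa using hga
      rw [hc] at hle
      simp only [hc] at hgk
      obtain ⟨d, hdd⟩ : ∃ d, d = eval a (derivative g) * c := ⟨_, rfl⟩
      have hd0 : d ≠ 0 := by rw [hdd]; exact mul_ne_zero hga0 hc0
      have hvd : v (algebraMap E F d) = v (algebraMap E F (eval a (derivative g))) * v (algebraMap E F c) := by
        rw [hdd, map_mul, map_mul]
      have hvd0 : 0 < v (algebraMap E F d) := zero_lt_iff.mpr (by simpa using hd0)
      rw [← hvd] at hle hgk
      obtain ⟨h, hh⟩ : ∃ h : E[X], h = Polynomial.C d⁻¹ * (taylor a g).comp (Polynomial.C c * X) := ⟨_, rfl⟩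
      have hcoef : ∀ k, h.coeff k = d⁻¹ * ((taylor a g).coeff k * c ^ k) := by
        intro k
        rw [hh, coeff_C_mul, comp_C_mul_X_coeff]
      have hvcoef : ∀ k, v (algebraMap E F (h.coeff k)) * v (algebraMap E F d) =
          v (algebraMap E F ((taylor a g).coeff k)) * v (algebraMap E F c) ^ k := by
        intro k
        rw [hcoef, ← map_pow, ← map_pow, ← map_mul, ← map_mul, ← map_mul, ← map_mul]
        congr 2
        field_simp
      have hc1 : h.coeff 1 = 1 := by
        rw [hcoef, taylor_coeff_one, pow_one, ← hdd, inv_mul_cancel₀ hd0]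
      have hc0' : v (algebraMap E F (h.coeff 0)) ≤ 1 := by
        have h1 := hvcoef 0
        rw [taylor_coeff_zero, pow_zero, mul_one] at h1
        rw [← h1] at hle
        exact (mul_le_iff_le_one_left hvd0).mp hle
      have hck : ∀ k, 1 < k → v (algebraMap E F (h.coeff k)) < 1 := by
        intro k hk
        have h1 := hgk k hk
        rw [← hvcoef] at h1
        exact (mul_lt_iff_lt_one_left hvd0).mp h1
      obtain ⟨r, hr⟩ : ∃ r : E[X], r = h - (Polynomial.C (h.coeff 0) + X) := ⟨_, rfl⟩
      set w := v.comap (algebraMap E F) with hw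
      have hrc : ∀ k, w (r.coeff k) < 1 := by
        intro k
        rw [hr, coeff_sub, coeff_add]
        match k with
        | 0 => simp
        | 1 => simp [coeff_C, hc1]
        | k + 2 =>
          have : (Polynomial.C (h.coeff 0)).coeff (k + 2) = 0 := coeff_C_of_ne_zero (by omega)
          rw [this, coeff_X_of_ne_one (by omega), add_zero, sub_zero]
          exact hck (k + 2) (by omega)
      have hrd : ∀ k, w ((derivative r).coeff k) < 1 := by
        intro k
        rw [coeff_derivative, map_mul]
        refine (mul_le_of_le_one_right' ?_).trans_lt (hrc (k + 1))
        exact_mod_cast natCast_le_one w (k + 1)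
      have hheq : h = Polynomial.C (h.coeff 0) + X + r := by rw [hr]; ring
      have hbb : w (-h.coeff 0) ≤ 1 := by rw [Valuation.map_neg]; exact hc0'
      obtain ⟨z, hz, -⟩ := hens h (fun i => by
        change v (algebraMap E F (h.coeff i)) ≤ 1
        match i with
        | 0 => exact hc0'
        | 1 => rw [hc1, map_one, map_one]
        | k + 2 => exact (hck (k + 2) (by omega)).le) (-h.coeff 0) hbb
        (by
          have : h.eval (-h.coeff 0) = r.eval (-h.coeff 0) := by
            rw [hr]
            simp
          rw [this]
          exact poly_lt w r hrc _ hbb)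
        (by
          have : (derivative h).eval (-h.coeff 0) = 1 + (derivative r).eval (-h.coeff 0) := by
            rw [hr]
            simp
          rw [this]
          have h1 := poly_lt w _ hrd _ hbb
          rw [Valuation.map_add_eq_of_lt_left w (by rwa [map_one]), map_one])
      have hroot : g.IsRoot (c * z + a) := by
        rw [hh, eval_mul, eval_C, eval_comp, eval_mul, eval_C, eval_X, taylor_eval] at hz
        exact (mul_eq_zero.mp hz).resolve_left (inv_ne_zero hd0)
      obtain ⟨q, hq⟩ := dvd_iff_isRoot.mpr hroot
      have hq0 : q ≠ 0 := by
        rintro rfl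
        exact hg (by rw [hq, mul_zero])
      have hqd : q.natDegree = m := by
        have h1 := congrArg natDegree hq
        rw [natDegree_mul (X_sub_C_ne_zero _) hq0, natDegree_X_sub_C, hdeg] at h1
        omega
      rw [hq]
      exact St.mul v (St.lin v hb _) (ih q hq0 (by omega) (by omega))

theorem nobest_case [FiniteDimensional E F] [IsGalois E F]
    (hres : ∀ (σ : F ≃ₐ[E] F) x, v x ≤ 1 → v (σ x - x) < 1)
    (hens : HensVal (v.comap (algebraMap E F)))
    (hno : ∀ y : F, ∃ e : E, v y = v (algebraMap E F e)) {l : ℕ} (hl : l.Prime)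
    (hfin : Module.finrank E F = l) {x : F} (hx : x ∉ (algebraMap E F).range)
    (hb : ∀ a : E, ∃ a' : E, v (x - algebraMap E F a') < v (x - algebraMap E F a))
    (S : Finset F) (hS : ∀ s ∈ S, v s ≤ 1) :
    ∃ α : F, v α ≤ 1 ∧ ∀ s ∈ S, MonoIn E v α s := by
  classical
  have hlv := l_lt v hres hno hx
  rw [hfin] at hlv
  have hunit := nat_unit v hl hlv
  obtain ⟨hdeg, htop⟩ := low_poly_top hl hfin hx
  have hG : ∀ s : F, ∃ g : E[X], aeval x g = s ∧ g.natDegree < l := by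
    intro s
    rw [← hdeg]
    exact exists_low_poly (Algebra.IsIntegral.isIntegral x) (htop s)
  choose G hG1 hG2 using hG
  have hcommon : ∀ S : Finset F, ∃ a0 : E, ∀ s ∈ S, G s ≠ 0 → ∀ a : E,
      v (x - algebraMap E F a) ≤ v (x - algebraMap E F a0) → ∀ k, 0 < k →
      v (algebraMap E F ((taylor a (G s)).coeff k)) * v (x - algebraMap E F a) ^ k <
        v (algebraMap E F ((G s).eval a)) := by
    intro S
    induction S using Finset.induction_on with
    | empty => exact ⟨0, by simp⟩
    | insert s S hs ih =>
      obtain ⟨a1, h1⟩ := ih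
      by_cases h0 : G s = 0
      · refine ⟨a1, fun t ht ht0 => ?_⟩
        rcases Finset.mem_insert.mp ht with rfl | ht
        · exact absurd h0 ht0
        · exact h1 t ht ht0
      · obtain ⟨a2, h2⟩ := St.all v hunit hens hno hb _ (G s) h0 (hG2 s) le_rfl
        rcases le_total (v (x - algebraMap E F a1)) (v (x - algebraMap E F a2)) with h | h
        · refine ⟨a1, fun t ht ht0 a ha => ?_⟩
          rcases Finset.mem_insert.mp ht with rfl | ht
          · exact h2 a (ha.trans h)
          · exact h1 t ht ht0 a ha
        · refine ⟨a2, fun t ht ht0 a ha => ?_⟩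
          rcases Finset.mem_insert.mp ht with rfl | ht
          · exact h2 a ha
          · exact h1 t ht ht0 a (ha.trans h)
  obtain ⟨a, ha⟩ := hcommon S
  obtain ⟨c, hc⟩ := hno (x - algebraMap E F a)
  have hy : x - algebraMap E F a ≠ 0 := fun h => hx ⟨a, (sub_eq_zero.mp h).symm⟩
  have hc0 : v (algebraMap E F c) ≠ 0 := by rw [← hc]; simpa using hy
  have hcF : algebraMap E F c ≠ 0 := by simpa using hc0
  refine ⟨(x - algebraMap E F a) / algebraMap E F c, by rw [map_div₀, hc, div_self hc0], fun s hs => ?_⟩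
  by_cases h0 : G s = 0
  · refine ⟨0, by simp, ?_⟩
    rw [map_zero, ← hG1 s, h0, map_zero]
  have hk := ha s hs h0 a le_rfl
  have htay : aeval (x - algebraMap E F a) (taylor a (G s)) = s := by
    rw [taylor_apply, aeval_comp]
    simp [hG1]
  have hv0 : v (algebraMap E F ((G s).eval a)) = v s := by
    have h1 : v (aeval (x - algebraMap E F a) (taylor a (G s))) = v (algebraMap E F ((G s).eval a)) := by
      rw [aeval_eq_sum_range]
      simp only [Algebra.smul_def]
      rw [Valuation.map_sum_eq_of_lt v (j := 0) (by simp)]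
      · simp [taylor_coeff_zero]
      · intro i hi
        rw [Finset.mem_sdiff, Finset.mem_singleton] at hi
        have := hk i (by omega)
        rw [map_mul, map_pow]
        simpa [taylor_coeff_zero] using this
    rw [← h1, htay]
  refine ⟨(taylor a (G s)).comp (Polynomial.C c * X), fun i => ?_, ?_⟩
  · rw [comp_C_mul_X_coeff, map_mul, map_mul, map_pow, map_pow, ← hc]
    refine le_trans ?_ (hS s hs)
    rw [← hv0]
    rcases Nat.eq_zero_or_pos i with rfl | hi
    · simp [taylor_coeff_zero]
    · exact (hk i hi).le
  · rw [aeval_comp, map_mul, aeval_C, aeval_X, mul_div_cancel₀ _ hcF, htay]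

theorem prime_step [FiniteDimensional E F] [IsGalois E F]
    (hinv : ∀ (σ : F ≃ₐ[E] F) x, v (σ x) = v x)
    (hres : ∀ (σ : F ≃ₐ[E] F) x, v x ≤ 1 → v (σ x - x) < 1)
    (hens : HensVal (v.comap (algebraMap E F))) {l : ℕ} (hl : l.Prime)
    (hfin : Module.finrank E F = l) (S : Finset F) (hS : ∀ s ∈ S, v s ≤ 1) :
    ∃ α : F, v α ≤ 1 ∧ ∀ s ∈ S, MonoIn E v α s := by
  by_cases hout : ∃ y : F, Out E v y
  · obtain ⟨y, hy⟩ := hout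
    rcases lt_or_gt_of_ne hy.ne_one with h | h
    · exact ram_case v hinv hl hfin hy h S hS
    · refine ram_case v hinv hl hfin (y := y⁻¹) ?_ ?_ S hS
      · intro e he
        apply hy e⁻¹
        rw [map_inv₀, map_inv₀, ← he, map_inv₀, inv_inv]
      · rw [map_inv₀]
        exact inv_lt_one_of_one_lt₀ h
  have hno : ∀ y : F, ∃ e : E, v y = v (algebraMap E F e) := by
    intro y
    by_contra hcon
    exact hout ⟨y, fun e he => hcon ⟨e, he⟩⟩
  obtain ⟨x, hx⟩ : ∃ x : F, x ∉ (algebraMap E F).range := by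
    by_contra hcon
    push Not at hcon
    have h1 : (⊥ : Subalgebra E F) = ⊤ := by
      rw [eq_top_iff]
      intro x _
      exact Algebra.mem_bot.mpr (hcon x)
    rw [Subalgebra.bot_eq_top_iff_finrank_eq_one, hfin] at h1
    exact hl.ne_one h1
  by_cases hb : ∃ a : E, ∀ a' : E, v (x - algebraMap E F a) ≤ v (x - algebraMap E F a')
  · obtain ⟨a, ha⟩ := hb
    obtain ⟨α, h1, h2⟩ := best_case v hinv hres hno hl hfin hx a ha
    exact ⟨α, h1, fun s hs => h2 s (hS s hs)⟩
  · push Not at hb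
    exact nobest_case v hres hens hno hl hfin hx hb S hS
end
end CISub

namespace CISub
open Pointwise IsLocalRing

theorem local_of_invariant {A B G : Type*} [CommRing A] [HenselianLocalRing A] [CommRing B] [IsDomain B]
    [Algebra A B] [Group G] [Finite G] [MulSemiringAction G B] [SMulCommClass G A B]
    [Algebra.IsInvariant A B G] : IsLocalRing B := by
  classical
  have := Fintype.ofFinite G
  have hint : Algebra.IsIntegral A B := Algebra.IsInvariant.isIntegral A B G
  have hover : ∀ M : Ideal B, M.IsMaximal → M.under A = maximalIdeal A := by
    intro M hM
    exact eq_maximalIdeal (Ideal.isMaximal_comap_of_isIntegral_of_isMaximal (R := A) M)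
  apply IsLocalRing.of_unique_max_ideal
  obtain ⟨M, hM⟩ := Ideal.exists_maximal B
  refine ⟨M, hM, fun M2 hM2 => ?_⟩
  by_contra hne
  obtain ⟨τ, hτ⟩ := Algebra.IsInvariant.exists_smul_of_under_eq A B G M M2
    ((hover M hM).trans (hover M2 hM2).symm)
  have hτM : τ • M ≠ M := by rw [← hτ]; exact hne
  let H := MulAction.stabilizer G M
  have hmax : ∀ g : G, (g • M).IsMaximal := by
    intro g
    rw [Ideal.pointwise_smul_eq_comap]
    exact Ideal.comap_isMaximal_of_equiv (MulSemiringAction.toRingEquiv G B g⁻¹)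
  -- the element b
  obtain ⟨y, hyI, hyM⟩ : ∃ y : B, (∀ g : G, g ∉ H → g • y ∈ M) ∧ y ∉ M := by
    have h1 : ¬ ((Finset.univ.filter (fun g : G => g ∉ H)).inf (fun g => g • M)) ≤ M := by
      intro hle
      obtain ⟨g, hg, hgle⟩ := (Ideal.IsPrime.inf_le' hM.isPrime).mp hle
      have h2 := (hmax g).eq_of_le hM.ne_top hgle
      exact (Finset.mem_filter.mp hg).2 h2
    obtain ⟨y, hy, hyM⟩ := Set.not_subset.mp h1
    refine ⟨y, fun g hg => ?_, hyM⟩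
    have hg' : g⁻¹ ∉ H := fun h => hg (by simpa using H.inv_mem h)
    have h3 : y ∈ g⁻¹ • M := by
      have := Finset.inf_le (f := fun g => g • M) (s := Finset.univ.filter (fun g : G => g ∉ H)) (Finset.mem_filter.mpr ⟨Finset.mem_univ g⁻¹, hg'⟩)
      exact this hy
    rw [← smul_inv_smul g⁻¹ y] at h3
    have h4 := (Ideal.smul_mem_pointwise_smul_iff (a := g⁻¹)).mp h3
    simpa using h4
  obtain ⟨z, hz⟩ : ∃ z, z * y - 1 ∈ M := by
    obtain ⟨z, m, hm, hzm⟩ := (Ideal.IsMaximal.exists_inv hM hyM)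
    refine ⟨z, ?_⟩
    rw [show z * y - 1 = - m by rw [← hzm]; ring]
    exact M.neg_mem hm
  obtain ⟨b, hb⟩ : ∃ b, b = z * y := ⟨_, rfl⟩
  rw [← hb] at hz
  have hbI : ∀ g : G, g ∉ H → g • b ∈ M := by
    intro g hg
    rw [hb, smul_mul']
    exact M.mul_mem_left _ (hyI g hg)
  have hH : ∀ h ∈ H, ∀ x ∈ M, h • x ∈ M := by
    intro h hh x hx
    have : h • x ∈ h • M := Ideal.smul_mem_pointwise_smul h x M hx
    rwa [MulAction.mem_stabilizer_iff.mp hh] at this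
  obtain ⟨c, hc⟩ : ∃ c, c = ∏ h : H, (h : G) • b := ⟨_, rfl⟩
  have hcH : ∀ h ∈ H, h • c = c := by
    intro h hh
    rw [hc, Finset.smul_prod']
    refine Fintype.prod_equiv (Equiv.mulLeft (⟨h, hh⟩ : H)) _ _ fun k => ?_
    simp [mul_smul]
  have hq : ∀ x : B, Ideal.Quotient.mk M x = 0 ↔ x ∈ M := fun x => Ideal.Quotient.eq_zero_iff_mem
  have hc1 : Ideal.Quotient.mk M c = 1 := by
    rw [hc, map_prod]
    refine Finset.prod_eq_one fun h _ => ?_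
    rw [← sub_eq_zero, ← map_one (Ideal.Quotient.mk M), ← map_sub, hq]
    have := hH h h.2 _ hz
    rwa [smul_sub, smul_one] at this
  have hcσ : ∀ g : G, g ∉ H → Ideal.Quotient.mk M (g • c) = 0 := by
    intro g hg
    rw [hc, Finset.smul_prod', map_prod]
    refine Finset.prod_eq_zero (Finset.mem_univ 1) ?_
    rw [hq]
    simpa using hbI g hg
  let φ : G ⧸ H → B := Quotient.lift (fun g : G => g • c) (by
    intro g1 g2 h
    have h' := QuotientGroup.leftRel_apply.mp h
    change g1 • c = g2 • c
    have h2 := hcH _ h'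
    rw [mul_smul] at h2
    rw [inv_smul_eq_iff] at h2
    exact h2.symm)
  have hφ : ∀ g : G, φ (g : G ⧸ H) = g • c := fun g => rfl
  let f : B[X] := ∏ q : G ⧸ H, (X - C (φ q))
  have hfm : f.Monic := monic_prod_of_monic _ _ (fun _ _ ↦ monic_X_sub_C _)
  have hfinv : ∀ g : G, g • f = f := by
    intro g
    change g • (∏ q : G ⧸ H, (X - C (φ q))) = _
    rw [Finset.smul_prod']
    refine Fintype.prod_equiv (MulAction.toPerm g) _ _ fun q => ?_
    obtain ⟨k, rfl⟩ := QuotientGroup.mk_surjective q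
    rw [smul_sub, smul_X, smul_C, MulAction.toPerm_apply, hφ, ← mul_smul]
    rfl
  have hlift : f ∈ Polynomial.lifts (algebraMap A B) :=
    f.lifts_iff_coeff_lifts.mpr fun n ↦ Algebra.IsInvariant.isInvariant (G := G) _ (fun g => by
      rw [← coeff_smul, hfinv])
  obtain ⟨p, hp1, -, hp2⟩ := Polynomial.lifts_and_natDegree_eq_and_monic hlift hfm
  have hev : ∀ (p : A[X]) (a : A), algebraMap A B (p.eval a) = (p.map (algebraMap A B)).eval (algebraMap A B a) := by
    intro p a
    rw [eval_map_algebraMap, aeval_algebraMap_apply_eq_algebraMap_eval]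
  have hmem : ∀ a : A, a ∈ maximalIdeal A ↔ algebraMap A B a ∈ M := by
    intro a
    rw [← hover M hM]; rfl
  have hf : f = (X - C c) * ∏ q ∈ Finset.univ.erase ((1 : G) : G ⧸ H), (X - C (φ q)) := by
    change ∏ q : G ⧸ H, (X - C (φ q)) = _
    rw [← Finset.mul_prod_erase _ _ (Finset.mem_univ ((1 : G) : G ⧸ H)), hφ, one_smul]
  have hr1 : Ideal.Quotient.mk M ((∏ q ∈ Finset.univ.erase ((1 : G) : G ⧸ H), (X - C (φ q))).eval 1) = 1 := by
    rw [eval_prod, map_prod]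
    refine Finset.prod_eq_one fun q hqq => ?_
    obtain ⟨k, rfl⟩ := QuotientGroup.mk_surjective q
    have hk : k ∉ H := by
      intro hk
      apply (Finset.mem_erase.mp hqq).1
      rw [QuotientGroup.eq]
      simpa using hk
    rw [eval_sub, eval_X, eval_C, map_sub, hφ, hcσ k hk, map_one, sub_zero]
  obtain ⟨a, ha, -⟩ := HenselianLocalRing.is_henselian p hp2 1
    (by
      rw [hmem, hev, hp1, hf, map_one, eval_mul, ← hq, map_mul, eval_sub, eval_X, eval_C, map_sub, hc1,
        map_one, sub_self, zero_mul])
    (by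
      have : p.derivative.eval 1 ∉ maximalIdeal A := by
        rw [hmem, hev, ← derivative_map, hp1, hf, map_one, ← hq, derivative_mul, eval_add, eval_mul,
          eval_mul, map_add, map_mul, map_mul, hr1]
        rw [eval_sub (p := X), eval_X, eval_C, map_sub (Ideal.Quotient.mk M) 1 c, hc1, map_one]
        simp
      simpa using this)
  have h0 : f.eval (algebraMap A B a) = 0 := by rw [← hp1, ← hev, ha, map_zero]
  change (∏ q : G ⧸ H, (X - C (φ q))).eval _ = 0 at h0
  rw [eval_prod, Finset.prod_eq_zero_iff] at h0
  obtain ⟨q, -, hq0⟩ := h0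
  obtain ⟨g, rfl⟩ := QuotientGroup.mk_surjective q
  rw [eval_sub, eval_X, eval_C, sub_eq_zero, hφ] at hq0
  have hca : c = algebraMap A B a := by
    rw [← inv_smul_eq_iff] at hq0
    rw [← hq0, Algebra.algebraMap_eq_smul_one, smul_comm, smul_one]
  have h1 := hcσ τ hτM
  rw [hca, Algebra.algebraMap_eq_smul_one, smul_comm, smul_one, ← Algebra.algebraMap_eq_smul_one,
    ← hca, hc1] at h1
  have : Nontrivial (B ⧸ M) := Ideal.Quotient.nontrivial_iff.mpr hM.ne_top
  exact one_ne_zero h1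

theorem local_gal {A K L : Type*} [CommRing A] [IsDomain A] [HenselianLocalRing A] [IsIntegrallyClosed A]
    [Field K] [Algebra A K] [IsFractionRing A K]
    [Field L] [Algebra K L] [Algebra A L] [IsScalarTower A K L]
    [IsGalois K L] [FiniteDimensional K L] : IsLocalRing (integralClosure A L) := by
  have h1 : IsFractionRing (integralClosure A L) L :=
    integralClosure.isFractionRing_of_finite_extension K L
  have h2 := Algebra.isInvariant_of_isGalois' A K L (integralClosure A L)
  have h3 : Finite (integralClosure A L ≃ₐ[A] integralClosure A L) :=
    Finite.of_equiv _ (galRestrict A K L (integralClosure A L)).toEquiv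
  exact local_of_invariant (A := A) (G := integralClosure A L ≃ₐ[A] integralClosure A L)
end CISub

namespace CISub
section
variable {A K Ω : Type*} [CommRing A] [IsDomain A] [HenselianLocalRing A]
    [Field K] [Algebra A K] [IsFractionRing A K]
    [Field Ω] [Algebra K Ω] [Algebra A Ω] [IsScalarTower A K Ω]

theorem local_sep [IsIntegrallyClosed A] [IsAlgClosed Ω] [Algebra.IsAlgebraic K Ω] (c : Ω) (hc : IsIntegral A c) (hsep : IsSeparable K c) :
    (c ≠ 0 ∧ IsIntegral A c⁻¹) ∨ (1 - c ≠ 0 ∧ IsIntegral A (1 - c)⁻¹) := by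
  let p := minpoly K c
  have hint : IsIntegral K c := Algebra.IsIntegral.isIntegral c
  let N := IntermediateField.adjoin K (p.rootSet Ω)
  have hsp : IsSplittingField K N p :=
    IntermediateField.adjoin_rootSet_isSplittingField (IsAlgClosed.splits _)
  have hg : IsGalois K N := IsGalois.of_separable_splitting_field (p := p) hsep
  have hf : FiniteDimensional K N := IsSplittingField.finiteDimensional N p
  have hcN : c ∈ N := IntermediateField.subset_adjoin _ _ (by
    rw [mem_rootSet]; exact ⟨minpoly.ne_zero hint, minpoly.aeval _ _⟩)
  have hst : IsScalarTower A K N := inferInstance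
  have hst2 : IsScalarTower A N Ω := IsScalarTower.of_algebraMap_eq (fun r => by rw [IsScalarTower.algebraMap_apply A K N, ← IsScalarTower.algebraMap_apply K N Ω, IsScalarTower.algebraMap_apply A K Ω])
  have hl := local_gal (A := A) (K := K) (L := N)
  have hc' : IsIntegral A (⟨c, hcN⟩ : N) := by
    rw [← isIntegral_algebraMap_iff (B := Ω) (algebraMap N Ω).injective]; exact hc
  have key : ∀ x : integralClosure A N, IsUnit x → ((x : N) : Ω) ≠ 0 ∧ IsIntegral A ((x : N) : Ω)⁻¹ := by
    rintro x ⟨u, rfl⟩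
    have h1 : (((u : integralClosure A N) : N) : Ω) * (((u⁻¹ : (integralClosure A N)ˣ) : integralClosure A N) : N) = 1 := by
      have := u.mul_inv
      exact_mod_cast congrArg (fun z : integralClosure A N => ((z : N) : Ω)) this
    refine ⟨left_ne_zero_of_mul_eq_one h1, ?_⟩
    rw [inv_eq_of_mul_eq_one_right h1]
    exact (((u⁻¹ : (integralClosure A N)ˣ) : integralClosure A N).2).map (IsScalarTower.toAlgHom A N Ω)
  rcases IsLocalRing.isUnit_or_isUnit_one_sub_self (⟨⟨c, hcN⟩, hc'⟩ : integralClosure A N) with h | h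
  · left; exact key _ h
  · right; exact key _ h

theorem local_alg [IsIntegrallyClosed A] [IsAlgClosed Ω] [Algebra.IsAlgebraic K Ω] (b : Ω) (hb : IsIntegral A b) :
    (b ≠ 0 ∧ IsIntegral A b⁻¹) ∨ (1 - b ≠ 0 ∧ IsIntegral A (1 - b)⁻¹) := by
  obtain ⟨q, hq⟩ := ExpChar.exists K
  have hqΩ : ExpChar Ω q := expChar_of_injective_algebraMap (algebraMap K Ω).injective q
  have hqs : ExpChar (separableClosure K Ω) q := expChar_of_injective_algebraMap (algebraMap K _).injective q
  obtain ⟨n, y, hy⟩ := IsPurelyInseparable.pow_mem (separableClosure K Ω) q b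
  have hsep : IsSeparable K (b ^ q ^ n) := by
    rw [← hy]; exact mem_separableClosure_iff.mp y.2
  have hpos : 0 < q ^ n := pow_pos (expChar_pos K q) n
  rcases local_sep (A := A) (b ^ q ^ n) (hb.pow _) hsep with ⟨h1, h2⟩ | ⟨h1, h2⟩
  · left
    refine ⟨fun h => h1 (by rw [h, zero_pow hpos.ne']), ?_⟩
    rw [← inv_pow] at h2
    exact h2.of_pow hpos
  · right
    have h3 : (1 - b) ^ q ^ n = 1 - b ^ q ^ n := by rw [sub_pow_expChar_pow, one_pow]
    rw [← h3] at h1 h2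
    refine ⟨fun h => h1 (by rw [h, zero_pow hpos.ne']), ?_⟩
    rw [← inv_pow] at h2
    exact h2.of_pow hpos

theorem seid [IsIntegrallyClosed A] [IsAlgClosed Ω] [Algebra.IsAlgebraic K Ω] (x : Ω) (hx : x ≠ 0) : ∀ n : ℕ, ∀ p : (integralClosure A Ω)[X],
    p.natDegree ≤ n → aeval x p = 0 → (∃ i, p.coeff i ≠ 0 ∧ IsIntegral A (p.coeff i : Ω)⁻¹) →
    IsIntegral A x ∨ IsIntegral A x⁻¹ := by
  intro n
  induction n with
  | zero =>
    rintro p hp h0 ⟨i, hi, -⟩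
    exfalso
    rw [eq_C_of_natDegree_le_zero hp, aeval_C] at h0
    have h1 : p.coeff 0 = 0 := Subtype.ext h0
    rw [eq_C_of_natDegree_le_zero hp, h1] at hi
    simp at hi
  | succ n ih =>
    rintro p hp h0 ⟨i, hi, hi'⟩
    obtain ⟨a, ha⟩ : ∃ a, a = p.coeff (n+1) := ⟨_, rfl⟩
    by_cases ha0 : a = 0
    · refine ih p ?_ h0 ⟨i, hi, hi'⟩
      rcases hp.lt_or_eq with h | h
      · omega
      · exfalso
        have : p.leadingCoeff = 0 := by rw [leadingCoeff, h, ← ha, ha0]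
        rw [leadingCoeff_eq_zero] at this
        simp [this] at hi
    have hdeg : p.natDegree = n + 1 := le_antisymm hp (le_natDegree_of_ne_zero (by rwa [← ha]))
    have ha0' : (a : Ω) ≠ 0 := fun h => ha0 (Subtype.ext h)
    have hy : IsIntegral (integralClosure A Ω) (a * x : Ω) := by
      have := isIntegral_leadingCoeff_smul p x h0
      rwa [leadingCoeff, hdeg, ← ha, Algebra.smul_def] at this
    have hyA : IsIntegral A (a * x : Ω) := isIntegral_trans _ hy
    let y : integralClosure A Ω := ⟨a * x, hyA⟩
    let q : (integralClosure A Ω)[X] := p.erase (n+1) + C y * X ^ n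
    have hq : aeval x q = 0 := by
      have h1 := monomial_add_erase p (n+1)
      have h2 : aeval x (monomial (n+1) (p.coeff (n+1))) + aeval x (p.erase (n+1)) = 0 := by
        rw [← map_add, h1, h0]
      rw [aeval_monomial, ← ha] at h2
      change aeval x (p.erase (n+1) + C y * X ^ n) = 0
      rw [map_add, map_mul, aeval_C, map_pow, aeval_X, ← h2]
      change _ + (a * x : Ω) * _ = (a : Ω) * _ + _
      ring
    have hqd : q.natDegree ≤ n := by
      refine natDegree_add_le_of_degree_le ?_ (natDegree_C_mul_X_pow_le _ _)
      rw [natDegree_le_iff_coeff_eq_zero]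
      intro m hm
      rw [coeff_erase]
      split_ifs with h
      · rfl
      · exact coeff_eq_zero_of_natDegree_lt (by omega)
    have hqc : ∀ j, j ≠ n → j ≠ n + 1 → q.coeff j = p.coeff j := by
      intro j h1 h2
      simp [q, h2, coeff_X_pow, h1]
    have hqn : (q.coeff n : Ω) = p.coeff n + a * x := by
      simp [q, y]
    -- if a is a unit
    by_cases hau : IsIntegral A (a : Ω)⁻¹
    · left
      have := hau.mul hyA
      rwa [inv_mul_cancel_left₀ ha0'] at this
    by_cases hyu : IsIntegral A (a * x : Ω)⁻¹
    · right
      have := hyu.mul a.2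
      rwa [mul_inv, mul_assoc, mul_comm x⁻¹, inv_mul_cancel_left₀ ha0'] at this
    refine ih q hqd hq ?_
    have hi1 : i ≠ n + 1 := by rintro rfl; exact hau (by rw [ha]; exact hi')
    by_cases hin : i = n
    · refine ⟨n, ?_⟩
      subst hin
      -- coeff u + y with u unit, y nonunit
      have hi0 : (p.coeff i : Ω) ≠ 0 := fun h => hi (Subtype.ext h)
      have h1 : IsIntegral A (-(a * x) * (p.coeff i : Ω)⁻¹ : Ω) := hyA.neg.mul hi'
      rcases local_alg (A := A) (K := K) _ h1 with ⟨h2, h3⟩ | ⟨h2, h3⟩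
      · exfalso
        apply hyu
        have h4 := (h3.mul hi').neg
        rw [mul_inv, inv_inv, mul_assoc, mul_inv_cancel₀ hi0, mul_one, inv_neg, neg_neg] at h4
        exact h4
      · have h5 : (q.coeff i : Ω) = (1 - -(a * x) * (p.coeff i : Ω)⁻¹) * p.coeff i := by
          rw [hqn]; field_simp; ring
        refine ⟨fun h => ?_, ?_⟩
        · rw [h] at h5
          exact mul_ne_zero h2 hi0 h5.symm
        · rw [h5, mul_inv]; exact h3.mul hi'
    · exact ⟨i, by rwa [hqc i hin hi1], by rwa [hqc i hin hi1]⟩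

end
end CISub

namespace CISub
section
variable {A K Ω : Type*} [CommRing A] [IsDomain A] [HenselianLocalRing A]
    [Field K] [Algebra A K] [IsFractionRing A K]
    [Field Ω] [Algebra K Ω] [Algebra A Ω] [IsScalarTower A K Ω]

theorem exists_V (A K Ω : Type*) [CommRing A] [IsDomain A] [HenselianLocalRing A]
    [Field K] [Algebra A K] [IsFractionRing A K]
    [Field Ω] [Algebra K Ω] [Algebra A Ω] [IsScalarTower A K Ω]
    [ValuationRing A] [IsAlgClosed Ω] [Algebra.IsAlgebraic K Ω] :
    ∃ V : ValuationSubring Ω, ∀ x, V.valuation x ≤ 1 ↔ IsIntegral A x := by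
  refine ⟨⟨(integralClosure A Ω).toSubring, ?_⟩, fun x => by
    rw [ValuationSubring.valuation_le_one_iff]; rfl⟩
  intro x
  change IsIntegral A x ∨ IsIntegral A x⁻¹
  by_cases hx : x = 0
  · left; rw [hx]; exact isIntegral_zero
  have hint : IsIntegral K x := Algebra.IsIntegral.isIntegral x
  let w := ValuationRing.valuation A K
  let p := minpoly K x
  have hp0 : p ≠ 0 := minpoly.ne_zero hint
  obtain ⟨i, hi, hmax⟩ := Finset.exists_max_image p.support (fun i => w (p.coeff i))
    (by simpa using hp0)
  have hmax' : ∀ j, w (p.coeff j) ≤ w (p.coeff i) := by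
    intro j
    by_cases hj : j ∈ p.support
    · exact hmax j hj
    · simp [notMem_support_iff.mp hj]
  have hc : p.coeff i ≠ 0 := mem_support_iff.mp hi
  have hl : C (p.coeff i)⁻¹ * p ∈ lifts (algebraMap A K) := by
    rw [lifts_iff_coeff_lifts]
    intro j
    have : (C (p.coeff i)⁻¹ * p).coeff j ∈ w.integer := by
      rw [Valuation.mem_integer_iff, coeff_C_mul, map_mul, map_inv₀,
        inv_mul_le_iff₀ (by simpa [zero_lt_iff] using hc), mul_one]
      exact hmax' j
    exact (ValuationRing.mem_integer_iff A K _).mp this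
  obtain ⟨q, hq⟩ := (mem_lifts _).mp hl
  refine seid (A := A) (K := K) x hx _ (q.map (algebraMap A (integralClosure A Ω))) le_rfl ?_ ⟨i, ?_⟩
  · rw [aeval_map_algebraMap, ← aeval_map_algebraMap K, hq, map_mul, minpoly.aeval, mul_zero]
  · have h1 : q.coeff i = 1 := by
      apply IsFractionRing.injective A K
      rw [← coeff_map, hq, map_one, coeff_C_mul, inv_mul_cancel₀ hc]
    rw [coeff_map, h1, map_one]
    exact ⟨one_ne_zero, by simpa using isIntegral_one⟩

theorem inv_of_V {Γ : Type*} [LinearOrderedCommGroupWithZero Γ] [Algebra.IsAlgebraic K Ω] (v : Valuation Ω Γ) (hV : ∀ x, v x ≤ 1 ↔ IsIntegral A x)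
    (σ : Ω ≃ₐ[K] Ω) (x : Ω) : v (σ x) = v x := by
  have mono : ∀ (σ : Ω ≃ₐ[K] Ω) y z, v y ≤ v z → v (σ y) ≤ v (σ z) := by
    intro σ y z h
    by_cases hz : z = 0
    · have : y = 0 := by simpa [hz] using h
      simp [this]
    have h0 : 0 < v z := by simpa [zero_lt_iff] using hz
    have h0' : 0 < v (σ z) := by simpa [zero_lt_iff] using hz
    have h1 : v (y / z) ≤ 1 := by rw [map_div₀]; exact (div_le_one₀ h0).mpr h
    have h2 : v (σ (y / z)) ≤ 1 := by
      rw [hV] at h1 ⊢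
      exact h1.map (σ.toAlgHom.restrictScalars A)
    rw [map_div₀, map_div₀] at h2
    exact (div_le_one₀ h0').mp h2
  have key : ∀ (σ : Ω ≃ₐ[K] Ω) x, v x ≤ v (σ x) := by
    intro σ x
    by_contra hlt
    push Not at hlt
    have smono : ∀ y z, v y < v z → v (σ y) < v (σ z) := by
      intro y z h
      by_contra h2
      push Not at h2
      have := mono σ.symm _ _ h2
      simp at this
      exact absurd h (not_lt.mpr this)
    have hanti : StrictAnti (fun n : ℕ => v (σ^[n] x)) := by
      apply strictAnti_nat_of_succ_lt
      intro n
      induction n with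
      | zero => simpa using hlt
      | succ n ih =>
        rw [Function.iterate_succ_apply' _ (n+1), Function.iterate_succ_apply' _ n]
        rw [Function.iterate_succ_apply' _ n] at ih
        refine smono _ _ ?_
        exact ih
    have hint : IsIntegral K x := Algebra.IsIntegral.isIntegral x
    have hroot : ∀ n : ℕ, σ^[n] x ∈ (minpoly K x).rootSet Ω := by
      intro n
      rw [mem_rootSet]
      refine ⟨minpoly.ne_zero hint, ?_⟩
      induction n with
      | zero => exact minpoly.aeval K x
      | succ n ih =>
        rw [Function.iterate_succ_apply']
        change aeval (σ.toAlgHom (σ^[n] x)) _ = 0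
        rw [aeval_algHom_apply, ih, map_zero]
    have hfin : ((minpoly K x).rootSet Ω).Finite := rootSet_finite _ _
    refine Set.infinite_of_injective_forall_mem (f := fun n : ℕ => σ^[n] x) ?_ hroot hfin
    intro a b hab
    exact hanti.injective (congrArg v hab)
  refine le_antisymm ?_ (key σ x)
  have := key σ.symm (σ x)
  simpa using this

theorem root_unique {F Γ : Type*} [Field F] [LinearOrderedCommGroupWithZero Γ] (v : Valuation F Γ)
    (g : F[X]) (hg : ∀ i, v (g.coeff i) ≤ 1) (a b : F) (ha : v a ≤ 1) (hb : v b ≤ 1)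
    (ga : g.eval a = 0) (gb : g.eval b = 0) (hab : v (b - a) < 1)
    (hd : v (g.derivative.eval a) = 1) : b = a := by
  obtain ⟨G, hG⟩ : ∃ G : v.valuationSubring[X], G.map v.valuationSubring.subtype = g := by
    have : g ∈ lifts v.valuationSubring.subtype := by
      rw [lifts_iff_coeff_lifts]
      intro i
      exact ⟨⟨g.coeff i, hg i⟩, rfl⟩
    exact (mem_lifts _).mp this
  obtain ⟨k, hk⟩ := G.binomExpansion ⟨a, ha⟩ ⟨b - a, hab.le⟩
  have h2 := congrArg (v.valuationSubring.subtype) hk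
  have hev : ∀ (H : v.valuationSubring[X]) (y : v.valuationSubring),
      v.valuationSubring.subtype (H.eval y) = (H.map v.valuationSubring.subtype).eval (y : F) := by
    intro H y
    rw [eval_map, ← eval₂_at_apply]; rfl
  rw [map_add, map_add, map_mul, map_mul, hev, hev, hev, ← derivative_map, hG, map_pow] at h2
  change g.eval (a + (b - a)) = g.eval a + g.derivative.eval a * (b - a) + k * (b - a) ^ 2 at h2
  rw [add_sub_cancel, ga, gb, zero_add] at h2
  have h3 : (g.derivative.eval a + k * (b - a)) * (b - a) = 0 := by rw [h2]; ring
  rcases mul_eq_zero.mp h3 with h | h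
  · exfalso
    have h4 : g.derivative.eval a = - (k * (b - a)) := eq_neg_of_add_eq_zero_left h
    rw [h4, Valuation.map_neg, map_mul] at hd
    have : v (k : F) ≤ 1 := k.2
    exact absurd hd (mul_lt_one_of_nonneg_of_lt_one_right this zero_le hab).ne
  · exact sub_eq_zero.mp h

theorem hens_of_V [IsAlgClosed Ω] [Algebra.IsAlgebraic K Ω] (V : ValuationSubring Ω)
    (hV : ∀ x, V.valuation x ≤ 1 ↔ IsIntegral A x)
    (E : Type*) [Field E] [Algebra K E] [Algebra E Ω] [IsScalarTower K E Ω] :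
    HensVal (V.valuation.comap (algebraMap E Ω)) := by
  have halg : Algebra.IsAlgebraic E Ω := Algebra.IsAlgebraic.tower_top (K := K) E
  have hnormal : Normal E Ω := { toIsAlgebraic := halg, splits' := fun x => IsAlgClosed.splits _ }
  intro g hg b hb hgb hgb'
  simp only [Valuation.comap_apply] at *
  let G := g.map (algebraMap E Ω)
  have hG : ∀ i, V.valuation (G.coeff i) ≤ 1 := by
    intro i; rw [coeff_map]; exact hg i
  have hev : ∀ (h : E[X]) (y : E), algebraMap E Ω (h.eval y) = (h.map (algebraMap E Ω)).eval (algebraMap E Ω y) := by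
    intro h y
    rw [eval_map, ← eval₂_at_apply]
  rw [hev] at hgb
  rw [hev, ← derivative_map] at hgb'
  by_cases h0 : g.eval b = 0
  · exact ⟨b, h0, by simp⟩
  have h0' : G.eval (algebraMap E Ω b) ≠ 0 := by
    rw [← hev]; simpa using h0
  have hsum := (IsAlgClosed.splits G).eval_derivative_div_eval_of_ne_zero h0'
  obtain ⟨ρ, hρ, hρb⟩ : ∃ ρ ∈ G.roots, V.valuation (ρ - algebraMap E Ω b) < 1 := by
    by_contra hcon
    push Not at hcon
    have h1 : (Multiset.map (fun z => 1 / (algebraMap E Ω b - z)) G.roots).sum ∈ V.valuation.integer := by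
      refine multiset_sum_mem _ ?_
      intro c hc
      obtain ⟨z, hz, rfl⟩ := Multiset.mem_map.mp hc
      have h2 := hcon z hz
      rw [Valuation.map_sub_swap] at h2
      rw [Valuation.mem_integer_iff, map_div₀, map_one]
      exact (div_le_one₀ (zero_lt_one.trans_le h2)).mpr h2
    rw [← hsum, Valuation.mem_integer_iff, map_div₀, hgb', div_le_one₀ (by simpa [zero_lt_iff] using h0')] at h1
    exact absurd hgb (not_lt.mpr h1)
  have hρ0 : G.eval ρ = 0 := (mem_roots'.mp hρ).2
  have hρ1 : V.valuation ρ ≤ 1 := by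
    have : ρ = (ρ - algebraMap E Ω b) + algebraMap E Ω b := by ring
    rw [this]
    exact V.valuation.map_add_le hρb.le hb
  have hρd : V.valuation (G.derivative.eval ρ) = 1 := by
    obtain ⟨k, hk⟩ := (lift_poly (E := Ω) V.valuation G.derivative
      (by simpa using poly_deriv_coeff V.valuation G hG))
    obtain ⟨z, hz⟩ := k.evalSubFactor ⟨ρ, hρ1⟩ ⟨algebraMap E Ω b, hb⟩
    have h2 := congrArg ((O Ω V.valuation).subtype) hz
    have hev : ∀ (H : (O Ω V.valuation)[X]) (y : (O Ω V.valuation)),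
        (O Ω V.valuation).subtype (H.eval y) = (H.map (O Ω V.valuation).subtype).eval (y : Ω) := by
      intro H y
      rw [eval_map, ← eval₂_at_apply]; rfl
    rw [map_sub, hev, hev, hk, map_mul] at h2
    change G.derivative.eval ρ - G.derivative.eval (algebraMap E Ω b) = z * (ρ - algebraMap E Ω b) at h2
    have hz1 : V.valuation (z : Ω) ≤ 1 := z.2
    have h3 : V.valuation (z * (ρ - algebraMap E Ω b)) < 1 := by
      rw [map_mul]; exact mul_lt_one_of_nonneg_of_lt_one_right hz1 zero_le hρb
    rw [sub_eq_iff_eq_add] at h2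
    rw [h2, Valuation.map_add_eq_of_lt_right _ (by rw [hgb']; exact h3), hgb']
  have hfix : ∀ τ : Ω ≃ₐ[E] Ω, τ ρ = ρ := by
    intro τ
    have hvτ : ∀ x, V.valuation (τ x) = V.valuation x := fun x =>
      inv_of_V (A := A) V.valuation hV (τ.restrictScalars K) x
    refine root_unique V.valuation G hG ρ (τ ρ) hρ1 (by rw [hvτ]; exact hρ1) hρ0 ?_ ?_ hρd
    · rw [eval_map_algebraMap] at hρ0 ⊢
      change aeval (τ.toAlgHom ρ) g = 0
      rw [aeval_algHom_apply, hρ0, map_zero]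
    · have h1 : V.valuation (τ ρ - algebraMap E Ω b) < 1 := by
        rw [← τ.commutes b, ← map_sub, hvτ]; exact hρb
      have : τ ρ - ρ = (τ ρ - algebraMap E Ω b) - (ρ - algebraMap E Ω b) := by ring
      rw [this]
      exact V.valuation.map_sub_lt h1 hρb
  have hsepρ : IsSeparable E ρ := by
    have hi : IsIntegral E ρ := Algebra.IsIntegral.isIntegral ρ
    refine (separable_iff_derivative_ne_zero (minpoly.irreducible hi)).mpr ?_
    intro hd0
    obtain ⟨r, hr⟩ := minpoly.dvd E ρ (show aeval ρ g = 0 by rw [← eval_map_algebraMap]; exact hρ0)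
    have : G.derivative.eval ρ = 0 := by
      rw [derivative_map, eval_map_algebraMap, hr, derivative_mul, hd0, zero_mul, zero_add, map_mul,
        minpoly.aeval, zero_mul]
    rw [this, map_zero] at hρd
    exact zero_ne_one hρd
  have hmem : ρ ∈ (⊥ : Subalgebra E Ω) := by
    by_contra hn
    obtain ⟨y, hy, hc⟩ := (notMem_iff_exists_ne_and_isConjRoot hsepρ (IsAlgClosed.splits _)).mp hn
    obtain ⟨τ, hτ⟩ := isConjRoot_iff_exists_algEquiv.mp hc
    have := hfix τ.symm
    rw [← hτ] at this
    simp at this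
    exact hy (by rw [← hτ, ← this])
  obtain ⟨c, hc⟩ := Algebra.mem_bot.mp hmem
  refine ⟨c, ?_, ?_⟩
  · apply (algebraMap E Ω).injective
    rw [hev, hc, map_zero]; exact hρ0
  · rw [map_sub, hc]; exact hρb

end
end CISub

namespace CISub
theorem ci_step {A C D : Type*} [CommRing A] [CommRing C] [CommRing D] [Algebra A C] [Algebra A D]
    [Algebra C D] [IsScalarTower A C D] (hC : IsCompleteIntersectionOver A C)
    (f : C[X]) (α : D) (hs : Function.Surjective (aeval (R := C) α))
    (hk : ∀ p : C[X], aeval α p = 0 ↔ f ∣ p) : IsCompleteIntersectionOver A D := by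
  obtain ⟨n, φ, hφ, g, hg⟩ := hC
  let ψ : C[X] →ₐ[A] D := (aeval (R := C) α).restrictScalars A
  let μ : (MvPolynomial (Fin n) A)[X] →ₐ[A] C[X] := Polynomial.mapAlgHom φ
  have hμ : Function.Surjective μ := Polynomial.map_surjective _ hφ
  obtain ⟨F, hF⟩ := hμ f
  let e := MvPolynomial.finSuccEquiv A n
  have hker : RingHom.ker (ψ.comp μ) = Ideal.span (Set.range (Fin.cons F (fun i => Polynomial.C (g i)) : Fin (n+1) → _)) := by
    have h1 : RingHom.ker μ = Ideal.span (Set.range (fun i => Polynomial.C (g i))) := by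
      have h := Polynomial.ker_mapRingHom (φ : MvPolynomial (Fin n) A →+* C)
      have h2 : RingHom.ker (φ : MvPolynomial (Fin n) A →+* C) = Ideal.span (Set.range g) := hg
      rw [h2, Ideal.map_span, ← Set.range_comp] at h
      exact h
    rw [Fin.range_cons, Ideal.span_insert, ← h1]
    ext p
    constructor
    · intro hp
      have hp' : aeval α (μ p) = 0 := hp
      obtain ⟨r, hr⟩ := (hk _).mp hp'
      obtain ⟨R, rfl⟩ := hμ r
      refine Submodule.mem_sup.mpr ⟨F * R, Ideal.mul_mem_right _ _ (Ideal.mem_span_singleton_self F), p - F * R, ?_, by ring⟩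
      rw [RingHom.mem_ker, map_sub, map_mul, hF, hr, sub_self]
    · intro hp
      obtain ⟨y, hy, z, hz, rfl⟩ := Submodule.mem_sup.mp hp
      obtain ⟨R, rfl⟩ := Ideal.mem_span_singleton.mp hy
      change aeval α (μ (F * R + z)) = 0
      rw [hk, map_add, map_mul, hF, RingHom.mem_ker.mp hz, add_zero]
      exact dvd_mul_right _ _
  refine ⟨n + 1, (ψ.comp μ).comp e.toAlgHom, (hs.comp hμ).comp e.surjective, fun i => e.symm ((Fin.cons F (fun i => Polynomial.C (g i)) : Fin (n+1) → _) i), ?_⟩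
  ext p
  rw [RingHom.mem_ker]
  change (ψ.comp μ) (e p) = 0 ↔ _
  rw [← RingHom.mem_ker, hker]
  have h5 : Ideal.span (Set.range fun i => e.symm ((Fin.cons F (fun i => Polynomial.C (g i)) : Fin (n+1) → _) i))
      = Ideal.map (e.symm : _ →+* _) (Ideal.span (Set.range (Fin.cons F (fun i => Polynomial.C (g i)) : Fin (n+1) → _))) := by
    rw [Ideal.map_span, ← Set.range_comp]; rfl
  rw [h5]
  constructor
  · intro h
    have := Ideal.mem_map_of_mem (e.symm : _ →+* MvPolynomial (Fin (n+1)) A) h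
    simpa using this
  · intro h
    have := Ideal.mem_map_of_mem (e : MvPolynomial (Fin (n+1)) A →+* (MvPolynomial (Fin n) A)[X]) h
    rw [Ideal.map_map] at this
    have h6 : (e : MvPolynomial (Fin (n+1)) A →+* (MvPolynomial (Fin n) A)[X]).comp (e.symm : _ →+* MvPolynomial (Fin (n+1)) A) = RingHom.id _ := by
      ext x <;> simp
    rw [h6, Ideal.map_id] at this
    exact this

theorem free_step {A C D : Type*} [CommRing A] [CommRing C] [CommRing D] [Algebra A C] [Algebra A D]
    [Algebra C D] [IsScalarTower A C D] [Module.Free A C] [Module.Finite A C]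
    (f : C[X]) (hf : f.Monic) (α : D) (hs : Function.Surjective (aeval (R := C) α))
    (hk : ∀ p : C[X], aeval α p = 0 ↔ f ∣ p) : Module.Free A D ∧ Module.Finite A D := by
  have hker : RingHom.ker (aeval (R := C) α) = Ideal.span {f} := by
    ext p; rw [RingHom.mem_ker, hk, Ideal.mem_span_singleton]
  let e : (C[X] ⧸ Ideal.span {f}) ≃ₐ[C] D :=
    (Ideal.quotientEquivAlgOfEq C hker.symm).trans (Ideal.quotientKerAlgEquivOfSurjective hs)
  have h1 : Module.Free C (C[X] ⧸ Ideal.span {f}) := Module.Free.of_basis (AdjoinRoot.powerBasis' hf).basis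
  have h2 : Module.Finite C (C[X] ⧸ Ideal.span {f}) := Module.Finite.of_basis (AdjoinRoot.powerBasis' hf).basis
  have h3 : Module.Free C D := Module.Free.of_equiv e.toLinearEquiv
  have h4 : Module.Finite C D := Module.Finite.equiv e.toLinearEquiv
  exact ⟨Module.Free.trans (S := C), Module.Finite.trans C D⟩
end CISub

namespace CISub
section
variable {A K L Γ : Type*} [CommRing A] [IsDomain A]
    [Field K] [Algebra A K] [IsFractionRing A K]
    [Field L] [Algebra K L] [Algebra A L] [IsScalarTower A K L]
    [LinearOrderedCommGroupWithZero Γ] (v : Valuation L Γ)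

def QQ (A : Type*) {K L Γ : Type*} [CommRing A] [Field K] [Algebra A K]
    [Field L] [Algebra K L] [Algebra A L]
    [LinearOrderedCommGroupWithZero Γ] (v : Valuation L Γ) (E : IntermediateField K L) : Prop :=
  ∀ S : Finset L, (∀ s ∈ S, s ∈ E ∧ v s ≤ 1) → ∃ B : Subalgebra A L, (∀ b ∈ B, b ∈ E) ∧
    (∀ s ∈ S, s ∈ B) ∧ Module.Free A B ∧ Module.Finite A B ∧ IsCompleteIntersectionOver A B

theorem QQ_bot [IsIntegrallyClosed A] (hV : ∀ x, v x ≤ 1 ↔ IsIntegral A x) :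
    QQ A v (⊥ : IntermediateField K L) := by
  intro S hS
  have hinj : Function.Injective (algebraMap A L) := by
    rw [IsScalarTower.algebraMap_eq A K L]
    exact (algebraMap K L).injective.comp (IsFractionRing.injective A K)
  let e : (⊥ : Subalgebra A L) ≃ₐ[A] A := Algebra.botEquivOfInjective hinj
  refine ⟨⊥, ?_, ?_, Module.Free.of_equiv e.symm.toLinearEquiv, Module.Finite.equiv e.symm.toLinearEquiv, ?_⟩
  · intro b hb
    obtain ⟨a, rfl⟩ := Algebra.mem_bot.mp hb
    rw [IsScalarTower.algebraMap_apply A K L]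
    exact IntermediateField.algebraMap_mem _ _
  · intro s hs
    obtain ⟨h1, h2⟩ := hS s hs
    obtain ⟨k, rfl⟩ := IntermediateField.mem_bot.mp h1
    rw [hV, isIntegral_algebraMap_iff (algebraMap K L).injective] at h2
    obtain ⟨a, rfl⟩ := IsIntegrallyClosed.isIntegral_iff.mp h2
    rw [← IsScalarTower.algebraMap_apply A K L]
    exact Subalgebra.algebraMap_mem _ _
  · let ee : MvPolynomial (Fin 0) A ≃ₐ[A] (⊥ : Subalgebra A L) := (MvPolynomial.isEmptyAlgEquiv A (Fin 0)).trans e.symm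
    refine ⟨0, ee.toAlgHom, ee.surjective, Fin.elim0, ?_⟩
    rw [Set.range_eq_empty, Ideal.span_empty]
    exact (RingHom.injective_iff_ker_eq_bot _).mp ee.injective

theorem ext_step (hV : ∀ x, v x ≤ 1 ↔ IsIntegral A x) (E E' : IntermediateField K L)
    (hE : QQ A v E) (hle : E ≤ E')
    (hstep : ∀ S : Finset L, (∀ s ∈ S, s ∈ E' ∧ v s ≤ 1) →
      ∃ α ∈ E', v α ≤ 1 ∧ ∀ s ∈ S, MonoIn E v α s) : QQ A v E' := by
  classical
  intro S hS
  obtain ⟨α, hαE, hα1, hα⟩ := hstep S hS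
  have hg : ∀ s : L, ∃ g : E[X], (∀ i, v (algebraMap E L (g.coeff i)) ≤ 1) ∧ (s ∈ S → aeval α g = s) := by
    intro s
    by_cases hs : s ∈ S
    · obtain ⟨g, h1, h2⟩ := hα s hs
      exact ⟨g, h1, fun _ => h2⟩
    · exact ⟨0, by simp, fun h => absurd h hs⟩
  choose g hg1 hg2 using hg
  have hαA : IsIntegral A α := (hV α).mp hα1
  have hstA : IsScalarTower A E L := IsScalarTower.of_algebraMap_eq (fun r => by
    rw [IsScalarTower.algebraMap_apply A K E, ← IsScalarTower.algebraMap_apply K E L, IsScalarTower.algebraMap_apply A K L])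
  have hαE' : IsIntegral E α := hαA.tower_top
  let f := minpoly E α
  have hf : ∀ i, v (algebraMap E L (f.coeff i)) ≤ 1 := by
    intro i
    rw [hV]
    obtain ⟨p, hp, hp0⟩ := hαA
    have : IsIntegral A (f.coeff i) := by
      refine isIntegral_coeff_of_dvd p f hp (minpoly.monic hαE') (minpoly.dvd E α ?_) i
      rw [aeval_map_algebraMap]; exact hp0
    exact this.map (IsScalarTower.toAlgHom A E L)
  let T : Finset L := (f.map (algebraMap E L)).coeffs ∪ S.biUnion (fun s => ((g s).map (algebraMap E L)).coeffs)
  have hcoef : ∀ p : E[X], (∀ i, v (algebraMap E L (p.coeff i)) ≤ 1) → ∀ s ∈ (p.map (algebraMap E L)).coeffs, s ∈ E ∧ v s ≤ 1 := by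
    intro p hp s hs
    obtain ⟨n, -, rfl⟩ := mem_coeffs_iff.mp hs
    rw [coeff_map]
    exact ⟨(p.coeff n).2, hp n⟩
  obtain ⟨B, hBE, hTB, hfree, hfin, hci⟩ := hE T (by
    intro s hs
    rcases Finset.mem_union.mp hs with h | h
    · exact hcoef f hf s h
    · obtain ⟨t, -, ht⟩ := Finset.mem_biUnion.mp h
      exact hcoef _ (hg1 t) s ht)
  have hlift : ∀ p : E[X], (∀ s ∈ (p.map (algebraMap E L)).coeffs, s ∈ T) →
      ∃ q : B[X], q.map (algebraMap B L) = p.map (algebraMap E L) := by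
    intro p hp
    refine (mem_lifts _).mp ((lifts_iff_coeff_lifts _).mpr fun n => ?_)
    by_cases h0 : (p.map (algebraMap E L)).coeff n = 0
    · rw [h0]; exact ⟨0, map_zero _⟩
    · exact ⟨⟨_, hTB _ (hp _ (coeff_mem_coeffs h0))⟩, rfl⟩
  obtain ⟨f0, hf0⟩ := hlift f (fun s hs => Finset.mem_union_left _ hs)
  have hinj : Function.Injective (algebraMap B L) := Subtype.val_injective
  have hf0m : f0.Monic := by
    rw [hinj.monic_map_iff, hf0]
    exact (minpoly.monic hαE').map _
  have haev : ∀ (q : B[X]) (p : E[X]), q.map (algebraMap B L) = p.map (algebraMap E L) → aeval α q = aeval α p := by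
    intro q p h
    rw [← eval_map_algebraMap, h, eval_map_algebraMap]
  let D : Subalgebra B L := (aeval (R := B) α).range
  let α' : D := ⟨α, X, aeval_X α⟩
  have hval : ∀ p : B[X], ((aeval α' p : D) : L) = aeval α p := by
    intro p
    exact (aeval_algHom_apply D.val α' p).symm
  have hs : Function.Surjective (aeval (R := B) α') := by
    rintro ⟨d, p, hp⟩
    exact ⟨p, Subtype.ext ((hval p).trans hp)⟩
  let ι : B →+* E := RingHom.codRestrict (algebraMap B L) E (fun b => hBE b b.2)
  have hι : (algebraMap E L).comp ι = algebraMap B L := rfl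
  have hιinj : Function.Injective ι := fun a b h => hinj (congrArg (algebraMap E L) h)
  have hk : ∀ p : B[X], aeval α' p = 0 ↔ f0 ∣ p := by
    intro p
    have h1 : aeval α' p = 0 ↔ aeval α p = 0 := by
      rw [← hval]; exact Subtype.ext_iff
    have hf00 : aeval α f0 = 0 := by rw [haev f0 f hf0, minpoly.aeval]
    rw [h1]
    constructor
    · intro h
      rw [← modByMonic_eq_zero_iff_dvd hf0m]
      have h2 : aeval α (p %ₘ f0) = 0 := by
        rw [aeval_modByMonic_eq_self_of_root hf00, h]
      by_contra hne
      have h3 : (p %ₘ f0).map ι ≠ 0 := (Polynomial.map_ne_zero_iff hιinj).mpr hne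
      have h4 := minpoly.degree_le_of_ne_zero E α h3 (by
        rw [← haev (p %ₘ f0) _ (by rw [Polynomial.map_map, hι]), h2])
      have h5 := degree_modByMonic_lt p hf0m
      rw [degree_map_eq_of_injective hιinj] at h4
      have h6 : f0.degree = f.degree := by
        rw [← degree_map_eq_of_injective hinj, hf0, degree_map]
      rw [h6] at h5
      exact absurd h5 (not_lt.mpr h4)
    · rintro ⟨r, rfl⟩
      rw [map_mul, hf00, zero_mul]
  have hFF := free_step (A := A) f0 hf0m α' hs hk
  have hCC := ci_step (A := A) hci f0 α' hs hk
  refine ⟨D.restrictScalars A, ?_, ?_, hFF.1, hFF.2, hCC⟩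
  · rintro b ⟨p, rfl⟩
    change aeval α p ∈ E'
    rw [haev p (p.map ι) (by rw [Polynomial.map_map, hι]), aeval_eq_sum_range]
    refine sum_mem fun i _ => ?_
    rw [Algebra.smul_def]
    exact mul_mem (hle (SetLike.coe_mem _)) (pow_mem hαE _)
  · intro s hs
    obtain ⟨q, hq⟩ := hlift (g s) (fun t ht => Finset.mem_union_right _ (Finset.mem_biUnion.mpr ⟨s, hs, ht⟩))
    exact ⟨q, (haev q _ hq).trans (hg2 s hs)⟩
end
end CISub

namespace CISub
section
variable {A K L Γ : Type*} [CommRing A] [IsDomain A]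
    [Field K] [Algebra A K] [IsFractionRing A K]
    [Field L] [Algebra K L] [Algebra A L] [IsScalarTower A K L]
    [LinearOrderedCommGroupWithZero Γ] (v : Valuation L Γ)

theorem next_field [IsGalois K L] [FiniteDimensional K L]
    (hV : ∀ x, v x ≤ 1 ↔ IsIntegral A x)
    (hinv : ∀ (σ : L ≃ₐ[K] L) x, v (σ x) = v x) (hL : HensVal v)
    (hH : ∀ E : IntermediateField K L, HensVal (v.comap (algebraMap E L)))
    (E : IntermediateField K L) (hE : E ≠ ⊤) :
    ∃ E' : IntermediateField K L, E < E' ∧ ∀ S : Finset L, (∀ s ∈ S, s ∈ E' ∧ v s ≤ 1) →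
      ∃ α ∈ E', v α ≤ 1 ∧ ∀ s ∈ S, MonoIn E v α s := by
  have hinvE : ∀ (σ : L ≃ₐ[E] L) x, v (σ x) = v x := fun σ x => hinv (σ.restrictScalars K) x
  by_cases hex : ∃ (σ : L ≃ₐ[E] L) (b : L), v b ≤ 1 ∧ ¬ v (σ b - b) < 1
  · obtain ⟨σ, b, hb, hσb⟩ := hex
    have hstA : IsScalarTower A E L := IsScalarTower.of_algebraMap_eq (fun r => by
      rw [IsScalarTower.algebraMap_apply A K E, ← IsScalarTower.algebraMap_apply K E L, IsScalarTower.algebraMap_apply A K L])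
    have hint : ∀ x, v x ≤ 1 → ∃ f : E[X], f.Monic ∧
        (∀ i, v (algebraMap E L (f.coeff i)) ≤ 1) ∧ aeval x f = 0 := by
      intro x hx
      obtain ⟨p, hp, hp0⟩ := (hV x).mp hx
      refine ⟨p.map (algebraMap A E), hp.map _, fun i => ?_, ?_⟩
      · rw [coeff_map, ← IsScalarTower.algebraMap_apply A E L, hV]
        exact isIntegral_algebraMap
      · rw [aeval_map_algebraMap]; exact hp0
    obtain ⟨α, h1, h2, h3, h4⟩ := unram_step v hL hint σ (hinvE σ) b hb hσb
    refine ⟨(IntermediateField.adjoin E {α}).restrictScalars K, ?_, ?_⟩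
    · refine lt_of_le_of_ne ?_ ?_
      · intro x hx
        exact IntermediateField.algebraMap_mem (IntermediateField.adjoin E {α}) (⟨x, hx⟩ : E)
      · intro h
        apply h2
        have h5 : α ∈ (IntermediateField.adjoin E {α}).restrictScalars K :=
          IntermediateField.mem_adjoin_simple_self E α
        rw [← h] at h5
        exact ⟨⟨α, h5⟩, rfl⟩
    · intro S hS
      exact ⟨α, IntermediateField.mem_adjoin_simple_self E α, h1, fun s hs => h4 s (hS s hs).1 (hS s hs).2⟩
  · push Not at hex
    have hsol := solvable_of_res v hinvE (fun σ x hx => hex σ x hx)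
    have hnt : Nontrivial (L ≃ₐ[E] L) := by
      by_contra hn
      rw [not_nontrivial_iff_subsingleton] at hn
      apply hE
      have h1 := IsGalois.card_aut_eq_finrank E L
      rw [Nat.card_of_subsingleton (1 : L ≃ₐ[E] L)] at h1
      exact IntermediateField.finrank_eq_one_iff_eq_top.mp h1.symm
    obtain ⟨N, hN, hp⟩ := exists_normal_prime_index (L ≃ₐ[E] L)
    let F : IntermediateField E L := IntermediateField.fixedField N
    have hgal : IsGalois E F := IsGalois.of_fixedField_normal_subgroup N
    have hfin : Module.finrank E F = N.index := by
      rw [IntermediateField.finrank_eq_fixingSubgroup_index, IntermediateField.fixingSubgroup_fixedField]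
    have hlift : ∀ (τ : F ≃ₐ[E] F) (x : F), ((τ x : F) : L) = (AlgEquiv.liftNormal τ L) (x : L) :=
      fun τ x => (AlgEquiv.liftNormal_commutes τ L x).symm
    refine ⟨F.restrictScalars K, ?_, ?_⟩
    · refine lt_of_le_of_ne ?_ ?_
      · intro x hx
        exact IntermediateField.algebraMap_mem F (⟨x, hx⟩ : E)
      · intro h
        have hb : F = ⊥ := by
          rw [eq_bot_iff]
          intro x hx
          have h5 : x ∈ F.restrictScalars K := hx
          rw [← h] at h5
          exact IntermediateField.mem_bot.mpr ⟨⟨x, h5⟩, rfl⟩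
        rw [hb, IntermediateField.finrank_bot] at hfin
        exact hp.one_lt.ne hfin
    · intro S hS
      classical
      let S' : Finset F := S.attach.image (fun s => ⟨s.1, (hS s.1 s.2).1⟩)
      obtain ⟨α, h1, h2⟩ := prime_step (E := E) (v.comap (algebraMap F L))
        (by
          intro τ x
          change v ((τ x : F) : L) = v (x : L)
          rw [hlift, hinvE])
        (by
          intro τ x hx
          change v (((τ x - x : F)) : L) < 1
          rw [AddSubgroupClass.coe_sub, hlift]
          exact hex _ _ hx)
        (hH E) hp hfin S' (by
          intro s hs
          obtain ⟨t, -, rfl⟩ := Finset.mem_image.mp hs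
          exact (hS t.1 t.2).2)
      refine ⟨α, α.2, h1, fun s hs => ?_⟩
      obtain ⟨g, hg, hgs⟩ := h2 ⟨s, (hS s hs).1⟩ (Finset.mem_image.mpr ⟨⟨s, hs⟩, Finset.mem_attach _ _, rfl⟩)
      refine ⟨g, hg, ?_⟩
      have := congrArg (algebraMap F L) hgs
      rw [← aeval_algebraMap_apply] at this
      exact this

theorem QQ_top [IsIntegrallyClosed A] [IsGalois K L] [FiniteDimensional K L]
    (hV : ∀ x, v x ≤ 1 ↔ IsIntegral A x)
    (hinv : ∀ (σ : L ≃ₐ[K] L) x, v (σ x) = v x) (hL : HensVal v)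
    (hH : ∀ E : IntermediateField K L, HensVal (v.comap (algebraMap E L))) :
    QQ A v (⊤ : IntermediateField K L) := by
  have key : ∀ n : ℕ, ∀ E : IntermediateField K L, Module.finrank E L = n → QQ A v E →
      QQ A v (⊤ : IntermediateField K L) := by
    intro n
    induction n using Nat.strong_induction_on with
    | _ n ih =>
      intro E hn hQ
      by_cases hE : E = ⊤
      · rwa [hE] at hQ
      obtain ⟨E', hlt, hstep⟩ := next_field v hV hinv hL hH E hE
      refine ih _ ?_ E' rfl (ext_step v hV E E' hQ hlt.le hstep)
      rw [← hn]
      exact IntermediateField.finrank_lt_of_gt hlt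
  exact key _ ⊥ rfl (QQ_bot v hV)
end

theorem exists_val (A K L : Type*) [CommRing A] [IsDomain A] [ValuationRing A] [HenselianLocalRing A]
    [Field K] [Algebra A K] [IsFractionRing A K]
    [Field L] [Algebra K L] [Algebra A L] [IsScalarTower A K L]
    [FiniteDimensional K L] (S : Finset L) (hS : ∀ s ∈ S, IsIntegral A s) [IsGalois K L] :
    ∃ B : Subalgebra A L,
    (∀ s ∈ S, s ∈ B) ∧ Module.Free A B ∧ Module.Finite A B ∧ IsCompleteIntersectionOver A B := by
  have : Algebra.IsAlgebraic K (AlgebraicClosure L) := Algebra.IsAlgebraic.trans K L (AlgebraicClosure L)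
  have hst : IsScalarTower A L (AlgebraicClosure L) := inferInstance
  have hst2 : IsScalarTower K L (AlgebraicClosure L) := inferInstance
  have hst3 : IsScalarTower A K (AlgebraicClosure L) := IsScalarTower.of_algebraMap_eq (fun r => by
      rw [IsScalarTower.algebraMap_apply A L, IsScalarTower.algebraMap_apply K L, ← IsScalarTower.algebraMap_apply A K L])
  obtain ⟨V, hV⟩ := exists_V A K (AlgebraicClosure L)
  let v : Valuation L V.ValueGroup := V.valuation.comap (algebraMap L (AlgebraicClosure L))
  have hv : ∀ x, v x ≤ 1 ↔ IsIntegral A x := by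
    intro x
    rw [← isIntegral_algebraMap_iff (B := AlgebraicClosure L) (algebraMap L (AlgebraicClosure L)).injective]
    exact hV _
  obtain ⟨B, -, h⟩ := QQ_top (A := A) (K := K) v hv (fun σ x => inv_of_V (A := A) v hv σ x)
    (hens_of_V (A := A) (K := K) V hV L) (fun E => by
      have : IsScalarTower K E (AlgebraicClosure L) := IsScalarTower.of_algebraMap_eq (fun r => by
        rw [IsScalarTower.algebraMap_apply E L, IsScalarTower.algebraMap_apply K L, ← IsScalarTower.algebraMap_apply K E L])
      exact hens_of_V (A := A) (K := K) V hV E) S (fun s hs => ⟨IntermediateField.mem_top, (hv s).mpr (hS s hs)⟩)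
  exact ⟨B, h⟩
end CISub

end

/-- Let `A` be a Henselian valuation ring which is not a field, with fraction field `K`, let
`L/K` be a finite Galois extension and let `B` be the integral closure of `A` in `L`.  Then
for any finite subset `S` of `B` there is an `A`-subalgebra `B'` of `B` containing `S` which
is free of finite rank as an `A`-module and of complete intersection over `A`. -/
theorem exists_complete_intersection_subalgebra
    {A K L : Type*} [CommRing A] [IsDomain A] [ValuationRing A] [HenselianLocalRing A]
    (hA : ¬IsField A)
    [Field K] [Algebra A K] [IsFractionRing A K]
    [Field L] [Algebra K L] [Algebra A L] [IsScalarTower A K L]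
    [IsGalois K L] [FiniteDimensional K L]
    (S : Finset ↥(integralClosure A L)) :
    ∃ B' : Subalgebra A ↥(integralClosure A L),
      (S : Set ↥(integralClosure A L)) ⊆ B' ∧
      Module.Free A ↥B' ∧ Module.Finite A ↥B' ∧
      IsCompleteIntersectionOver A ↥B' := by
  classical
  obtain ⟨B, hSB, hfree, hfin, n, φ, hφ, g, hg⟩ := CISub.exists_val A K L
    (Finset.image (Subtype.val : integralClosure A L → L) S) (by
      intro s hs
      obtain ⟨t, -, rfl⟩ := Finset.mem_image.mp hs
      exact t.2)
  have hle : ∀ b : B, IsIntegral A (b : L) := fun b =>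
    (Algebra.IsIntegral.isIntegral (R := A) b).map B.val
  let e : B ≃ₐ[A] B.comap (integralClosure A L).val :=
    AlgEquiv.ofBijective
      ((B.val.codRestrict (integralClosure A L) hle).codRestrict (B.comap (integralClosure A L).val)
        (fun b => b.2))
      ⟨fun a b h => Subtype.ext (congrArg
          (fun z : B.comap (integralClosure A L).val => ((z : integralClosure A L) : L)) h),
        fun b => ⟨⟨((b : integralClosure A L) : L), b.2⟩, rfl⟩⟩
  refine ⟨B.comap (integralClosure A L).val, ?_, Module.Free.of_equiv e.toLinearEquiv,
    Module.Finite.equiv e.toLinearEquiv, n, e.toAlgHom.comp φ, e.surjective.comp hφ, g, ?_⟩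
  · intro s hs
    exact hSB _ (Finset.mem_image.mpr ⟨s, hs, rfl⟩)
  · rw [← hg]
    ext p
    rw [RingHom.mem_ker, RingHom.mem_ker]
    exact EmbeddingLike.map_eq_zero_iff (f := e)
end

section
/- Let L be a finite Galois extension of K and let B be the integral closure of A in L. If B is a finitely generated A-module, then B is of complete intersection over A; that is, for some n ≥ 0 there exists a surjective A-algebra homomorphism from the polynomial ring A[X₁, …, Xₙ] onto B whose kernel is generated by n elements. -/
section CI

theorem ci_of_presentation {A C ι : Type*} [CommRing A] [CommRing C] [Algebra A C] [Finite ι]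
    (P : Algebra.Presentation A C ι ι) : IsCompleteIntersectionOver A C := by
  obtain ⟨n, ⟨e⟩⟩ := Finite.exists_equiv_fin ι
  let Q := P.reindex e.symm e.symm
  refine ⟨n, MvPolynomial.aeval Q.val, Q.toGenerators.aeval_val_surjective, Q.relation, ?_⟩
  rw [Q.span_range_relation_eq_ker, Q.ker_eq_ker_aeval_val]

theorem ci_iff {A C : Type*} [CommRing A] [CommRing C] [Algebra A C] :
    IsCompleteIntersectionOver A C ↔
      ∃ n : ℕ, Nonempty (Algebra.Presentation A C (Fin n) (Fin n)) := by
  constructor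
  · rintro ⟨n, f, hf, v, hv⟩
    exact ⟨n, ⟨{__ := Algebra.Generators.ofSurjective (fun x ↦ f (.X x)) (by convert! hf; ext; simp)
                relation := v
                span_range_relation_eq_ker := hv.symm.trans (by congr; ext; simp) }⟩⟩
  · rintro ⟨n, ⟨P⟩⟩
    exact ci_of_presentation P

theorem ci_trans {R S T : Type*} [CommRing R] [CommRing S] [CommRing T] [Algebra R S] [Algebra S T]
    [Algebra R T] [IsScalarTower R S T]
    (h1 : IsCompleteIntersectionOver R S) (h2 : IsCompleteIntersectionOver S T) :
    IsCompleteIntersectionOver R T := by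
  obtain ⟨n, ⟨P⟩⟩ := ci_iff.1 h1
  obtain ⟨m, ⟨Q⟩⟩ := ci_iff.1 h2
  exact ci_of_presentation (Q.comp P)

theorem ci_trans' {R S T : Type*} [CommRing R] [CommRing S] [CommRing T] [Algebra R S] [Algebra S T]
    [Algebra R T] (h : ∀ r, algebraMap R T r = algebraMap S T (algebraMap R S r))
    (h1 : IsCompleteIntersectionOver R S) (h2 : IsCompleteIntersectionOver S T) :
    IsCompleteIntersectionOver R T := by
  have : IsScalarTower R S T := IsScalarTower.of_algebraMap_eq h
  exact ci_trans h1 h2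

theorem ci_equiv {R S T : Type*} [CommRing R] [CommRing S] [CommRing T] [Algebra R S]
    [Algebra R T] (e : S ≃ₐ[R] T)
    (h1 : IsCompleteIntersectionOver R S) : IsCompleteIntersectionOver R T := by
  obtain ⟨n, ⟨P⟩⟩ := ci_iff.1 h1
  exact ci_of_presentation (P.ofAlgEquiv e)

theorem ci_adjoinRoot {R : Type*} [CommRing R] (f : Polynomial R) :
    IsCompleteIntersectionOver R (AdjoinRoot f) := by
  let e := MvPolynomial.uniqueAlgEquiv R (Fin 1)
  refine ⟨1, (AdjoinRoot.mkₐ f).comp e.toAlgHom, ?_, fun _ => e.symm f, ?_⟩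
  · exact (AdjoinRoot.mk_surjective).comp e.surjective
  · ext p
    rw [Set.range_const, Ideal.mem_span_singleton, RingHom.mem_ker]
    change AdjoinRoot.mk f (e p) = 0 ↔ _
    rw [AdjoinRoot.mk_eq_zero]
    constructor
    · rintro ⟨q, hq⟩
      refine ⟨e.symm q, e.injective ?_⟩
      simp [hq]
    · rintro ⟨q, hq⟩
      refine ⟨e q, ?_⟩
      simp [hq]

theorem ci_field (k l : Type*) [Field k] [Field l] [Algebra k l] [FiniteDimensional k l] :
    IsCompleteIntersectionOver k l := by
  have key : ∀ E : IntermediateField k l, IsCompleteIntersectionOver k E := by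
    apply IntermediateField.induction_on_adjoin
    · exact ci_of_presentation
        (Algebra.Presentation.ofBijectiveAlgebraMap.{0, 0} (R := k) (S := (⊥ : IntermediateField k l))
          (IntermediateField.botEquiv k l).symm.bijective)
    · intro E x hE
      have hx : IsIntegral E x := Algebra.IsIntegral.isIntegral x
      have h2 : IsCompleteIntersectionOver E (IntermediateField.adjoin E {x}) :=
        ci_equiv (IntermediateField.adjoinRootEquivAdjoin E hx) (ci_adjoinRoot _)
      exact ci_trans' (S := E) (T := IntermediateField.adjoin E {x}) (fun _ => rfl) hE h2
  exact ci_equiv IntermediateField.topEquiv (key ⊤)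

theorem ci_of_away {A B ι : Type*} [CommRing A] [CommRing B] [Algebra A B] [Finite ι]
    (φ : MvPolynomial ι A →ₐ[A] B) (hφ : Function.Surjective φ) (g : ι → MvPolynomial ι A)
    (hg : ∀ i, φ (g i) = 0) (h : MvPolynomial ι A) (hu : IsUnit (φ h))
    (hh : ∀ f, φ f = 0 → h * f ∈ Ideal.span (Set.range g)) : IsCompleteIntersectionOver A B := by
  let J := Ideal.span (Set.range g)
  have hJ : ∀ a ∈ J, φ a = 0 := by
    intro a ha
    have : J ≤ RingHom.ker φ := by
      rw [Ideal.span_le]; rintro _ ⟨i, rfl⟩; exact hg i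
    exact this ha
  let ψ : (MvPolynomial ι A ⧸ J) →ₐ[A] B := Ideal.Quotient.liftₐ J φ hJ
  let _ : Algebra (MvPolynomial ι A ⧸ J) B := ψ.toRingHom.toAlgebra
  have : IsScalarTower A (MvPolynomial ι A ⧸ J) B :=
    IsScalarTower.of_algebraMap_eq fun x => (ψ.commutes x).symm
  have hmk : ∀ f, algebraMap (MvPolynomial ι A ⧸ J) B (Ideal.Quotient.mk J f) = φ f := fun f => rfl
  have : IsLocalization.Away (Ideal.Quotient.mk J h) B := by
    refine ⟨⟨?_, ?_, ?_⟩⟩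
    · rintro ⟨_, n, rfl⟩
      simp only [map_pow, hmk]
      exact hu.pow n
    · intro z
      obtain ⟨f, rfl⟩ := hφ z
      exact ⟨(Ideal.Quotient.mk J f, 1), by simp [hmk]⟩
    · intro x y hxy
      obtain ⟨x, rfl⟩ := Ideal.Quotient.mk_surjective x
      obtain ⟨y, rfl⟩ := Ideal.Quotient.mk_surjective y
      refine ⟨⟨_, 1, rfl⟩, ?_⟩
      simp only [pow_one]
      rw [← map_mul, ← map_mul, Ideal.Quotient.eq, ← mul_sub]
      apply hh
      rw [map_sub, sub_eq_zero]
      exact hxy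
  have P : Algebra.Presentation A (MvPolynomial ι A ⧸ J) ι ι :=
    Algebra.Presentation.naive (v := g)
  have Q := Algebra.Presentation.localizationAway B (Ideal.Quotient.mk J h)
  exact ci_of_presentation (Q.comp P)

/-- Nakayama lifting. -/
theorem ci_of_fiber {A B ι : Type*} [CommRing A] [IsLocalRing A] [CommRing B] [IsLocalRing B]
    [Algebra A B] [IsLocalHom (algebraMap A B)]
    [Finite ι] [Module.Finite A B] [Module.Free A B]
    (φ : MvPolynomial ι A →ₐ[A] B) (hφ : Function.Surjective φ) (g : ι → MvPolynomial ι A)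
    (hg : ∀ i, φ (g i) = 0)
    (hk : RingHom.ker φ ≤ Ideal.span (Set.range g) ⊔
      (IsLocalRing.maximalIdeal A).map (algebraMap A (MvPolynomial ι A))) :
    IsCompleteIntersectionOver A B := by
  set m := IsLocalRing.maximalIdeal A
  set J := Ideal.span (Set.range g)
  set I := RingHom.ker φ
  set mS := m.map (algebraMap A (MvPolynomial ι A))
  have hJI : J ≤ I := by
    rw [Ideal.span_le]; rintro _ ⟨i, rfl⟩; exact hg i
  have : Module.FinitePresentation A B := Module.finitePresentation_of_projective A B
  have : Algebra.FinitePresentation A B := Algebra.FinitePresentation.of_finitePresentation A B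
  have hfg : I.FG := Algebra.FinitePresentation.ker_fG_of_surjective φ hφ
  obtain ⟨s, hs⟩ := φ.toLinearMap.exists_rightInverse_of_surjective (LinearMap.range_eq_top.2 hφ)
  have hs' : ∀ b, φ (s b) = b := fun b => LinearMap.congr_fun hs b
  -- intersection
  have hint : ∀ f ∈ mS, f - s (φ f) ∈ mS * I := by
    intro f hf
    have : f ∈ (mS.restrictScalars A) := hf
    rw [Ideal.smul_top_eq_map m |>.symm] at this
    induction this using Submodule.smul_induction_on' with
    | smul r hr n hn =>
      have : r • n - s (φ (r • n)) = algebraMap A _ r * (n - s (φ n)) := by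
        rw [map_smul, map_smul, ← smul_sub, Algebra.smul_def]
      rw [this]
      refine Ideal.mul_mem_mul (Ideal.mem_map_of_mem _ hr) ?_
      simp [I, RingHom.mem_ker, hs']
    | add x hx y hy h1 h2 =>
      rw [← Ideal.smul_top_eq_map m |>.symm] at hx hy
      have := add_mem (h1 hx) (h2 hy)
      convert this using 1
      simp only [map_add]; ring
  have hle : I ≤ J ⊔ mS • I := by
    intro f hf
    obtain ⟨j, hj, t, ht, rfl⟩ := Submodule.mem_sup.1 (hk hf)
    refine add_mem (Submodule.mem_sup_left hj) (Submodule.mem_sup_right ?_)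
    have h1 := hint t ht
    have h2 : φ t = 0 := by
      have h3 : φ (j + t) = 0 := hf
      have h4 : φ j = 0 := hJI hj
      simpa [h4] using h3
    simpa [h2] using h1
  obtain ⟨h, h1, h2⟩ := Submodule.exists_sub_one_mem_and_smul_le_of_fg_of_le_sup hfg le_rfl hle
  refine ci_of_away φ hφ g hg h ?_ ?_
  · have h3 : mS ≤ (IsLocalRing.maximalIdeal B).comap φ := by
      rw [Ideal.map_le_iff_le_comap]
      intro x hx
      simp only [Ideal.mem_comap, AlgHom.commutes]
      exact map_nonunit (algebraMap A B) x hx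
    have h4 := h3 h1
    rw [Ideal.mem_comap, map_sub, map_one] at h4
    by_contra hc
    have h5 := sub_mem ((IsLocalRing.mem_maximalIdeal _).2 hc) h4
    rw [sub_sub_cancel] at h5
    exact h5 isUnit_one
  · intro f hf
    exact h2 (Submodule.smul_mem_pointwise_smul f h _ hf)

end CI
section Val

open Polynomial

theorem val_aux {B L : Type*} [CommRing B] [IsLocalRing B] [Field L] [Algebra B L]
    (hB : ∀ x : L, IsIntegral B x → ∃ y, algebraMap B L y = x) (x : L) :
    ∀ (n : ℕ) (f : B[X]), f.natDegree ≤ n → aeval x f = 0 → (∃ i, IsUnit (f.coeff i)) →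
      (∃ y, algebraMap B L y = x) ∨ (∃ y, algebraMap B L y = x⁻¹) := by
  intro n
  induction n with
  | zero =>
    intro f hf hx ⟨i, hi⟩
    exfalso
    rw [Polynomial.eq_C_of_natDegree_le_zero hf] at hx hi
    rw [coeff_C] at hi
    split_ifs at hi with h0
    · rw [aeval_C] at hx
      have := hi.map (algebraMap B L)
      rw [hx] at this
      exact not_isUnit_zero this
    · exact not_isUnit_zero hi
  | succ n ih =>
    intro f hf hx ⟨i, hi⟩
    by_cases hd : f.natDegree ≤ n
    · exact ih f hd hx ⟨i, hi⟩
    have hd' : f.natDegree = n + 1 := by omega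
    set a := f.coeff (n + 1) with ha
    have hla : f.leadingCoeff = a := by rw [leadingCoeff, hd']
    obtain ⟨c, hc⟩ := hB _ (isIntegral_leadingCoeff_smul f x hx)
    rw [hla, Algebra.smul_def] at hc
    by_cases hau : IsUnit a
    · left
      obtain ⟨u, hu⟩ := hau
      refine ⟨↑u⁻¹ * c, ?_⟩
      rw [map_mul, hc, ← mul_assoc, ← map_mul, ← hu]
      simp
    by_cases hcu : IsUnit c
    · right
      obtain ⟨u, hu⟩ := hcu
      refine ⟨↑u⁻¹ * a, eq_inv_of_mul_eq_one_left ?_⟩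
      rw [map_mul, mul_assoc, ← hc, ← map_mul, ← hu]
      simp
    let f' := f - C a * X ^ (n + 1) + C c * X ^ n
    refine ih f' ?_ ?_ ⟨i, ?_⟩
    · rw [natDegree_le_iff_coeff_eq_zero]
      intro N hN
      simp only [f', coeff_add, coeff_sub, coeff_C_mul, coeff_X_pow]
      rw [if_neg (by omega : N ≠ n)]
      by_cases hN' : N = n + 1
      · subst hN'; simp [ha]
      · rw [if_neg hN', coeff_eq_zero_of_natDegree_lt (by omega)]; simp
    · simp only [f', map_add, map_sub, hx, map_mul, aeval_C, map_pow, aeval_X, hc]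
      ring
    · have hi1 : i ≠ n + 1 := by rintro rfl; exact hau hi
      simp only [f', coeff_add, coeff_sub, coeff_C_mul, coeff_X_pow]
      rw [if_neg hi1]
      by_contra hcon
      have h1 : f.coeff i - a * 0 + c * (if i = n then 1 else 0) ∈ IsLocalRing.maximalIdeal B := hcon
      have h2 : c * (if i = n then 1 else 0) ∈ IsLocalRing.maximalIdeal B :=
        Ideal.mul_mem_right _ _ hcu
      have h3 := sub_mem h1 h2
      rw [add_sub_cancel_right, mul_zero, sub_zero] at h3
      exact h3 hi

theorem val_main {A K L : Type*} [CommRing A] [IsDomain A] [ValuationRing A]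
    [Field K] [Algebra A K] [IsFractionRing A K]
    [Field L] [Algebra K L] [Algebra A L] [IsScalarTower A K L] [FiniteDimensional K L]
    [IsLocalRing (integralClosure A L)] : ValuationRing (integralClosure A L) := by
  have : IsFractionRing (integralClosure A L) L :=
    integralClosure.isFractionRing_of_finite_extension K L
  rw [ValuationRing.iff_isInteger_or_isInteger _ L]
  intro x
  have hx : IsIntegral K x := Algebra.IsIntegral.isIntegral x
  set f := minpoly K x
  have hf : f ≠ 0 := minpoly.ne_zero hx
  let v := ValuationRing.valuation A K
  obtain ⟨i, hi, hmax⟩ := Finset.exists_max_image f.support (fun i => v (f.coeff i))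
    (Polynomial.support_nonempty.2 hf)
  have hi0 : f.coeff i ≠ 0 := Polynomial.mem_support_iff.1 hi
  let g := C (f.coeff i)⁻¹ * f
  have hg : g ∈ Polynomial.lifts (algebraMap A K) := by
    rw [Polynomial.lifts_iff_coeff_lifts]
    intro j
    rw [Set.mem_range, ← ValuationRing.mem_integer_iff, Valuation.mem_integer_iff]
    simp only [g, coeff_C_mul, map_mul, map_inv₀]
    by_cases hj : f.coeff j = 0
    · simp [hj]
    · have := hmax j (Polynomial.mem_support_iff.2 hj)
      have hv : v (f.coeff i) ≠ 0 := (Valuation.ne_zero_iff _).2 hi0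
      change (v (f.coeff i))⁻¹ * v (f.coeff j) ≤ 1
      rw [inv_mul_le_iff₀ (zero_lt_iff.2 hv), mul_one]
      exact this
  obtain ⟨h, hh⟩ := (Polynomial.mem_lifts _).1 hg
  have hB : ∀ x : L, IsIntegral (integralClosure A L) x →
      ∃ y, algebraMap (integralClosure A L) L y = x := by
    intro x hx
    exact ⟨⟨x, isIntegral_trans x hx⟩, rfl⟩
  refine val_aux hB x h.natDegree (h.map (algebraMap A _)) natDegree_map_le ?_ ⟨i, ?_⟩
  · rw [aeval_map_algebraMap, ← aeval_map_algebraMap K, hh]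
    simp [g, f]
  · rw [coeff_map]
    have : h.coeff i = 1 := by
      apply IsFractionRing.injective A K
      rw [← coeff_map, hh]
      simp [g, hi0]
    simp [this]

end Val
section Loc

open Polynomial Pointwise

theorem local_aux {A B G : Type*} [CommRing A] [HenselianLocalRing A] [CommRing B] [IsDomain B]
    [Algebra A B] [Algebra.IsIntegral A B] [Group G] [Finite G] [MulSemiringAction G B]
    [Algebra.IsInvariant A B G] [SMulCommClass G A B] (n : Ideal B) [hn : n.IsMaximal] (s0 : G) :
    s0 • n = n := by
  classical
  have := Fintype.ofFinite G
  by_contra hs0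
  have hund : n.under A = IsLocalRing.maximalIdeal A :=
    IsLocalRing.eq_maximalIdeal (Ideal.IsMaximal.under A n)
  -- choose b0
  have hsup : n ⊔ ⨅ s ∈ Finset.univ.filter (fun s : G => s • n ≠ n), s • n = ⊤ := by
    apply Ideal.sup_iInf_eq_top
    intro s hs
    have hs' : s • n ≠ n := (Finset.mem_filter.1 hs).2
    have hmax : (s • n).IsMaximal := by
      rw [Ideal.pointwise_smul_eq_comap]
      exact Ideal.comap_isMaximal_of_equiv _
    exact Ideal.IsMaximal.coprime_of_ne hn hmax hs'.symm
  obtain ⟨u, hu, b0, hb0, hub⟩ := Submodule.mem_sup.1 ((Ideal.eq_top_iff_one _).1 hsup)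
  have hb0' : ∀ s : G, s • n ≠ n → b0 ∈ s • n := by
    intro s hs
    simp only [Submodule.mem_iInf] at hb0
    exact hb0 s (by simp [hs])
  let D := Finset.univ.filter (fun s : G => s • n = n)
  let b := ∏ t ∈ D, t • b0
  have h1 : Ideal.Quotient.mk n b = 1 := by
    simp only [b, map_prod]
    apply Finset.prod_eq_one
    intro t ht
    have ht' : t • n = n := (Finset.mem_filter.1 ht).2
    have : b0 = 1 - u := by rw [← hub]; ring
    rw [this, smul_sub, smul_one, map_sub, map_one, sub_eq_self, Ideal.Quotient.eq_zero_iff_mem]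
    have h := Ideal.smul_mem_pointwise_smul t u n hu
    rwa [ht'] at h
  have h2 : ∀ s : G, s • n = n → s • b = b := by
    intro s hs
    simp only [b, Finset.smul_prod', smul_smul]
    apply Finset.prod_equiv (Equiv.mulLeft s)
    · intro t
      simp only [D, Finset.mem_filter, Finset.mem_univ, true_and, Equiv.coe_mulLeft, mul_smul]
      constructor
      · intro h; rw [h, hs]
      · intro h
        have h' : s • t • n = s • n := by rw [h, hs]
        exact smul_left_cancel s h'
    · intro t _
      rfl
  have h3 : ∀ s : G, s • n ≠ n → s • b ∈ n := by
    intro s hs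
    have hdvd : b0 ∣ b := by
      have : (1 : G) ∈ D := by simp [D]
      simpa using Finset.dvd_prod_of_mem (fun t : G => t • b0) this
    have hs' : s⁻¹ • n ≠ n := by
      intro h
      apply hs
      conv_lhs => rw [← h]
      rw [smul_inv_smul]
    have : b ∈ s⁻¹ • n := Ideal.mem_of_dvd _ hdvd (hb0' _ hs')
    rwa [Ideal.mem_inv_pointwise_smul_iff] at this
  have h4 : ∀ s : G, s • b ≠ b → Ideal.Quotient.mk n (s • b) = 0 := by
    intro s hs
    rw [Ideal.Quotient.eq_zero_iff_mem]
    exact h3 s fun h => hs (h2 s h)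
  let p := prodXSubSMul G B b
  have hp : p ∈ Polynomial.lifts (algebraMap A B) := by
    rw [Polynomial.lifts_iff_coeff_lifts]
    intro j
    exact Algebra.IsInvariant.isInvariant (G := G) _ fun g => prodXSubSMul.coeff G B b g j
  obtain ⟨f, hf, -, hfm⟩ := Polynomial.lifts_and_natDegree_eq_and_monic hp
    (prodXSubSMul.monic G B b)
  let q0 : G ⧸ MulAction.stabilizer G b := ((1 : G) : G ⧸ MulAction.stabilizer G b)
  have hmod : p.map (Ideal.Quotient.mk n) =
      (X - C 1) * X ^ (Finset.univ.erase q0).card := by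
    simp only [p, prodXSubSMul, Polynomial.map_prod, Polynomial.map_sub, map_X, map_C]
    rw [← Finset.mul_prod_erase _ _ (Finset.mem_univ q0)]
    congr 1
    · simp [q0, MulAction.ofQuotientStabilizer_mk, h1]
    · rw [Finset.prod_eq_pow_card]
      intro q hq
      induction q using QuotientGroup.induction_on with
      | H g =>
        rw [MulAction.ofQuotientStabilizer_mk, h4, C_0, sub_zero]
        intro h
        apply (Finset.mem_erase.1 hq).1
        rw [QuotientGroup.eq]
        simp only [mul_one, inv_mem_iff]
        exact h
  have hfmod : f.map ((Ideal.Quotient.mk n).comp (algebraMap A B)) =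
      (X - C 1) * X ^ (Finset.univ.erase q0).card := by
    rw [← Polynomial.map_map, hf, hmod]
  have hev : ∀ g : A[X], Ideal.Quotient.mk n (algebraMap A B (g.eval 1)) =
      (g.map ((Ideal.Quotient.mk n).comp (algebraMap A B))).eval 1 := by
    intro g
    rw [eval_map, ← RingHom.comp_apply, ← Polynomial.eval₂_at_apply, map_one]
  obtain ⟨a, ha, -⟩ := HenselianLocalRing.is_henselian f hfm 1
    (by
      rw [← hund, Ideal.mem_comap, ← Ideal.Quotient.eq_zero_iff_mem, hev, hfmod]
      simp)
    (by
      by_contra hc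
      have hc' : f.derivative.eval 1 ∈ n.under A := by rw [hund]; exact hc
      rw [Ideal.mem_comap, ← Ideal.Quotient.eq_zero_iff_mem, hev, ← Polynomial.derivative_map,
        hfmod] at hc'
      simp at hc')
  have hroot : p.eval (algebraMap A B a) = 0 := by
    rw [← hf, eval_map, Polynomial.eval₂_at_apply, ha, map_zero]
  simp only [p, prodXSubSMul, eval_prod, Finset.prod_eq_zero_iff] at hroot
  obtain ⟨q, -, hq⟩ := hroot
  induction q using QuotientGroup.induction_on with
  | H g =>
    rw [MulAction.ofQuotientStabilizer_mk, eval_sub, eval_X, eval_C, sub_eq_zero] at hq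
    have hb : b = algebraMap A B a := by
      rw [← inv_smul_smul g b, ← hq, smul_algebraMap]
    have hsb : s0 • b = b := by rw [hb, smul_algebraMap]
    have h5 := h3 s0 hs0
    rw [hsb, ← Ideal.Quotient.eq_zero_iff_mem, h1] at h5
    exact one_ne_zero h5

theorem local_main {A K L : Type*} [CommRing A] [IsDomain A] [IsIntegrallyClosed A]
    [HenselianLocalRing A]
    [Field K] [Algebra A K] [IsFractionRing A K]
    [Field L] [Algebra K L] [Algebra A L] [IsScalarTower A K L]
    [IsGalois K L] [FiniteDimensional K L] : IsLocalRing (integralClosure A L) := by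
  have : IsFractionRing (integralClosure A L) L :=
    integralClosure.isFractionRing_of_finite_extension K L
  let _ : MulSemiringAction Gal(L/K) (integralClosure A L) :=
    IsIntegralClosure.MulSemiringAction A K L _
  have := Algebra.isInvariant_of_isGalois A K L (integralClosure A L)
  have : SMulCommClass Gal(L/K) A (integralClosure A L) :=
    ⟨fun g a b => map_smul (galRestrict A K L (integralClosure A L) g) a b⟩
  obtain ⟨n, hn⟩ := Ideal.exists_maximal (integralClosure A L)
  refine IsLocalRing.of_unique_max_ideal ⟨n, hn, ?_⟩
  intro n' hn'
  have e1 := IsLocalRing.eq_maximalIdeal (Ideal.IsMaximal.under A n)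
  have e2 := IsLocalRing.eq_maximalIdeal (Ideal.IsMaximal.under A n')
  obtain ⟨g, hg⟩ := Algebra.IsInvariant.exists_smul_of_under_eq A (integralClosure A L)
    Gal(L/K) n n' (e1.trans e2.symm)
  rw [hg]
  exact local_aux (A := A) n g

end Loc
section Core

theorem core_alg {S B ι : Type*} [CommRing S] [CommRing B] [IsLocalRing B] (φ : S →+* B)
    (hφ : Function.Surjective φ) (mS : Ideal S) (Y : S)
    (hmax : IsLocalRing.maximalIdeal B = Ideal.span {φ Y} ⊔ mS.map φ)
    (he : ∃ e : ℕ, φ Y ^ e ∈ mS.map φ)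
    (P : ι → S) (hP1 : ∀ i, φ (P i) ∈ IsLocalRing.maximalIdeal B)
    (hP2 : ∀ F, φ F ∈ IsLocalRing.maximalIdeal B →
      F ∈ Ideal.span (Set.range P) ⊔ Ideal.span {Y} ⊔ mS) :
    ∃ g : Option ι → S, (∀ i, φ (g i) = 0) ∧ RingHom.ker φ ≤ Ideal.span (Set.range g) ⊔ mS := by
  classical
  obtain ⟨e, he1, he2⟩ : ∃ e, φ Y ^ e ∈ mS.map φ ∧ ∀ j < e, φ Y ^ j ∉ mS.map φ :=
    ⟨Nat.find he, Nat.find_spec he, fun j hj => Nat.find_min he hj⟩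
  have hQ : ∀ i, ∃ Q ε, ε ∈ mS ∧ φ (P i - Y * Q - ε) = 0 := by
    intro i
    have h := hP1 i
    rw [hmax] at h
    obtain ⟨y, hy, z, hz, hyz⟩ := Submodule.mem_sup.1 h
    obtain ⟨c, rfl⟩ := Ideal.mem_span_singleton.1 hy
    obtain ⟨Q, rfl⟩ := hφ c
    obtain ⟨ε, hε, rfl⟩ := (Ideal.mem_map_iff_of_surjective φ hφ).1 hz
    refine ⟨Q, ε, hε, ?_⟩
    rw [map_sub, map_sub, map_mul, ← hyz]; ring
  choose Q ε hε hQ using hQ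
  obtain ⟨ε', hε', hY⟩ := (Ideal.mem_map_iff_of_surjective φ hφ).1 he1
  let g : Option ι → S := fun o => o.elim (Y ^ e - ε') (fun i => P i - Y * Q i - ε i)
  have hg : ∀ i, φ (g i) = 0 := by
    rintro (_ | i)
    · simp [g, hY]
    · exact hQ i
  refine ⟨g, hg, ?_⟩
  set J := Ideal.span (Set.range g) ⊔ mS with hJ
  have hgJ : ∀ o, g o ∈ J := fun o => Ideal.mem_sup_left (Ideal.subset_span ⟨o, rfl⟩)
  have hmJ : ∀ x ∈ mS, x ∈ J := fun x hx => Ideal.mem_sup_right hx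
  have hφJ : ∀ x ∈ J, φ x ∈ mS.map φ := by
    have : J ≤ (mS.map φ).comap φ := by
      refine sup_le ?_ Ideal.le_comap_map
      rw [Ideal.span_le]
      rintro _ ⟨i, rfl⟩
      simp [hg i]
    exact this
  have hmax' : ∀ F, φ F ∈ IsLocalRing.maximalIdeal B → F ∈ J ⊔ Ideal.span {Y} := by
    intro F hF
    have : Ideal.span (Set.range P) ⊔ Ideal.span {Y} ⊔ mS ≤ J ⊔ Ideal.span {Y} := by
      refine sup_le (sup_le ?_ le_sup_right) (le_trans le_sup_right le_sup_left)
      rw [Ideal.span_le]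
      rintro _ ⟨i, rfl⟩
      have : P i = (g (some i) + ε i) + Y * Q i := by simp [g]
      rw [this]
      exact Submodule.add_mem_sup (add_mem (hgJ _) (hmJ _ (hε i)))
        (Ideal.mul_mem_right _ _ (Ideal.mem_span_singleton_self Y))
    exact this (hP2 F hF)
  intro F hF
  have hF' : φ F ∈ mS.map φ := by
    rw [RingHom.mem_ker] at hF; rw [hF]; exact zero_mem _
  have key : ∀ j ≤ e, F ∈ J ⊔ Ideal.span {Y ^ j} := by
    intro j
    induction j with
    | zero =>
      intro _
      apply Ideal.mem_sup_right
      simp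
    | succ j ih =>
      intro hj
      obtain ⟨x, hx, y, hy, rfl⟩ := Submodule.mem_sup.1 (ih (by omega))
      obtain ⟨U, rfl⟩ := Ideal.mem_span_singleton.1 hy
      have h1 : φ Y ^ j * φ U ∈ mS.map φ := by
        have := sub_mem hF' (hφJ x hx)
        simpa using this
      have h2 : φ U ∈ IsLocalRing.maximalIdeal B := by
        intro hu
        exact he2 j (by omega) ((Ideal.mul_unit_mem_iff_mem _ hu).1 h1)
      obtain ⟨x', hx', y', hy', rfl⟩ := Submodule.mem_sup.1 (hmax' U h2)
      obtain ⟨V, rfl⟩ := Ideal.mem_span_singleton.1 hy'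
      rw [show x + Y ^ j * (x' + Y * V) = (x + Y ^ j * x') + Y ^ (j + 1) * V by ring]
      exact Submodule.add_mem_sup (add_mem hx (Ideal.mul_mem_left _ _ hx'))
        (Ideal.mul_mem_right _ _ (Ideal.mem_span_singleton_self _))
  have hYe : Y ^ e ∈ J := by
    have : Y ^ e = g none + ε' := by simp [g]
    rw [this]
    exact add_mem (hgJ _) (hmJ _ hε')
  have h := key e le_rfl
  rwa [sup_eq_left.2] at h
  rwa [Ideal.span_singleton_le_iff_mem]

open MvPolynomial in
theorem core {A B : Type*} [CommRing A] [IsLocalRing A] [CommRing B] [IsLocalRing B]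
    [Algebra A B] [IsLocalHom (algebraMap A B)] [Module.Finite A B] [Module.Free A B]
    (π : B) (hmax : IsLocalRing.maximalIdeal B =
      Ideal.span {π} ⊔ (IsLocalRing.maximalIdeal A).map (algebraMap A B))
    (he : ∃ e : ℕ, π ^ e ∈ (IsLocalRing.maximalIdeal A).map (algebraMap A B)) :
    IsCompleteIntersectionOver A B := by
  have hfin : FiniteDimensional (IsLocalRing.ResidueField A) (IsLocalRing.ResidueField B) :=
    inferInstance
  obtain ⟨n, ψ, hψ, p, hp⟩ :=
    ci_field (IsLocalRing.ResidueField A) (IsLocalRing.ResidueField B)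
  set m := IsLocalRing.maximalIdeal A
  choose x hx using fun i => IsLocalRing.residue_surjective (ψ (X i))
  have hres : Function.Surjective (MvPolynomial.map (σ := Fin n) (IsLocalRing.residue A)) :=
    MvPolynomial.map_surjective _ IsLocalRing.residue_surjective
  choose P hP using fun i => hres (p i)
  let φ : MvPolynomial (Option (Fin n)) A →ₐ[A] B := aeval (fun o => o.elim π x)
  have hφX : φ (X none) = π := by simp [φ]
  have hφψ : ∀ F : MvPolynomial (Fin n) A, IsLocalRing.residue B (φ (rename some F)) =
      ψ (MvPolynomial.map (IsLocalRing.residue A) F) := by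
    intro F
    have : ((IsLocalRing.residue B).comp φ.toRingHom).comp (rename some).toRingHom =
      ψ.toRingHom.comp (MvPolynomial.map (IsLocalRing.residue A)) := by
      apply MvPolynomial.ringHom_ext
      · intro r
        simp [φ]
      · intro i
        simp [φ, hx]
    exact RingHom.congr_fun this F
  have hφS : (m.map (algebraMap A (MvPolynomial (Option (Fin n)) A))).map φ.toRingHom =
      m.map (algebraMap A B) := by
    rw [Ideal.map_map]
    congr 1
    ext r
    simp
  -- surjectivity
  have hsurj : Function.Surjective φ := by
    have key : ∀ j : ℕ, ∀ b : B, ∃ F c, b - φ F - π ^ j * c ∈ m.map (algebraMap A B) := by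
      intro j
      induction j with
      | zero => intro b; exact ⟨0, b, by simp⟩
      | succ j ih =>
        intro b
        obtain ⟨F, c, hc⟩ := ih b
        obtain ⟨q, hq⟩ := hψ (IsLocalRing.residue B c)
        obtain ⟨F0, rfl⟩ := hres q
        rw [← hφψ, ← sub_eq_zero, ← map_sub, IsLocalRing.residue_eq_zero_iff, hmax] at hq
        obtain ⟨y, hy, z, hz, hyz⟩ := Submodule.mem_sup.1 hq
        obtain ⟨d, rfl⟩ := Ideal.mem_span_singleton.1 hy
        refine ⟨F + X none ^ j * rename some F0, -d, ?_⟩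
        have : b - φ (F + X none ^ j * rename some F0) - π ^ (j + 1) * -d =
            (b - φ F - π ^ j * c) - π ^ j * z := by
          rw [map_add, map_mul, map_pow, hφX]
          linear_combination (π ^ j) * hyz
        rw [this]
        exact sub_mem hc (Ideal.mul_mem_left _ _ hz)
    obtain ⟨e, he⟩ := he
    have htop : (⊤ : Submodule A B) ≤ LinearMap.range φ.toLinearMap := by
      apply Submodule.le_of_le_smul_of_le_jacobson_bot (I := m) Module.Finite.fg_top
        (IsLocalRing.maximalIdeal_le_jacobson _)
      intro b _
      obtain ⟨F, c, hc⟩ := key e b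
      have hb : b - φ F ∈ m.map (algebraMap A B) := by
        have := add_mem hc (Ideal.mul_mem_right c _ he)
        simpa using this
      have hb' : b - φ F ∈ m • (⊤ : Submodule A B) := by
        rw [Ideal.smul_top_eq_map]; exact hb
      have := Submodule.add_mem_sup (LinearMap.mem_range_self φ.toLinearMap F) hb'
      simpa using this
    intro b
    exact htop (Submodule.mem_top : b ∈ ⊤)
  obtain ⟨g, hg1, hg2⟩ := core_alg φ.toRingHom hsurj
    (m.map (algebraMap A (MvPolynomial (Option (Fin n)) A))) (X none)
    (by rw [hφS, hmax]; simp [hφX]) (by rw [hφS]; simpa [hφX] using he)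
    (fun i => rename some (P i))
    (by
      intro i
      rw [← IsLocalRing.residue_eq_zero_iff]
      refine (hφψ _).trans ?_
      rw [hP]
      have : p i ∈ RingHom.ker ψ := by rw [hp]; exact Ideal.subset_span ⟨i, rfl⟩
      exact this)
    (by
      intro F hF
      let F0 : MvPolynomial (Fin n) A := aeval (fun o : Option (Fin n) => o.elim 0 X) F
      have hFF : F - rename some F0 ∈ Ideal.span {(X none : MvPolynomial (Option (Fin n)) A)} := by
        rw [← Ideal.Quotient.eq]
        let mk := Ideal.Quotient.mkₐ A (Ideal.span {(X none : MvPolynomial (Option (Fin n)) A)})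
        have : mk = (mk.comp (rename some)).comp (aeval (fun o : Option (Fin n) => o.elim 0 X)) := by
          apply MvPolynomial.algHom_ext
          rintro (_ | i)
          · simp only [AlgHom.comp_apply, aeval_X, Option.elim, map_zero]
            exact Ideal.Quotient.eq_zero_iff_mem.2 (Ideal.mem_span_singleton_self _)
          · simp
        exact DFunLike.congr_fun this F
      have h1 : φ (rename some F0) ∈ IsLocalRing.maximalIdeal B := by
        obtain ⟨G, hG⟩ := Ideal.mem_span_singleton.1 hFF
        have h2 : rename some F0 = F - X none * G := by rw [← hG]; ring
        rw [h2, map_sub, map_mul, hφX]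
        refine sub_mem hF (Ideal.mul_mem_right _ _ ?_)
        rw [hmax]
        exact Ideal.mem_sup_left (Ideal.mem_span_singleton_self _)
      rw [← IsLocalRing.residue_eq_zero_iff, hφψ, ← RingHom.mem_ker, hp] at h1
      have h3 : F0 ∈ Ideal.span (Set.range P) ⊔ m.map (C : A →+* MvPolynomial (Fin n) A) := by
        have h4 : Ideal.span (Set.range p) = (Ideal.span (Set.range P)).map
            (MvPolynomial.map (IsLocalRing.residue A)) := by
          rw [Ideal.map_span, ← Set.range_comp]
          congr 2
          ext1 i
          exact (hP i).symm
        rw [h4, ← Ideal.mem_comap, Ideal.comap_map_of_surjective' _ hres, MvPolynomial.ker_map,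
          IsLocalRing.ker_residue] at h1
        exact h1
      have h5 := Ideal.mem_map_of_mem (rename some : MvPolynomial (Fin n) A →ₐ[A] _).toRingHom h3
      rw [Ideal.map_sup, Ideal.map_span, Ideal.map_map, ← Set.range_comp] at h5
      rw [← sub_add_cancel F (rename some F0)]
      refine add_mem (Ideal.mem_sup_left (Ideal.mem_sup_right hFF)) ?_
      obtain ⟨y, hy, z, hz, hyz⟩ := Submodule.mem_sup.1 h5
      change y + z = rename some F0 at hyz
      rw [← hyz]
      refine add_mem (Ideal.mem_sup_left (Ideal.mem_sup_left hy)) (Ideal.mem_sup_right ?_)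
      have h6 : algebraMap A (MvPolynomial (Option (Fin n)) A) =
          (rename some : MvPolynomial (Fin n) A →ₐ[A] _).toRingHom.comp C := by
        apply RingHom.ext
        intro r
        simp [MvPolynomial.algebraMap_eq]
      rw [h6]
      exact hz)
  exact ci_of_fiber φ hsurj g hg1 hg2

end Core
section Final

theorem exists_unif {A B : Type*} [CommRing A] [IsLocalRing A] [CommRing B] [IsLocalRing B]
    [Algebra A B] [IsLocalHom (algebraMap A B)] [Module.Finite A B] [IsBezout B] :
    ∃ π : B, IsLocalRing.maximalIdeal B =
      Ideal.span {π} ⊔ (IsLocalRing.maximalIdeal A).map (algebraMap A B) ∧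
      ∃ e : ℕ, π ^ e ∈ (IsLocalRing.maximalIdeal A).map (algebraMap A B) := by
  set m := IsLocalRing.maximalIdeal A
  set mB := m.map (algebraMap A B) with hmB
  have hle : mB ≤ IsLocalRing.maximalIdeal B := by
    rw [hmB, Ideal.map_le_iff_le_comap]
    intro x hx
    exact map_nonunit (algebraMap A B) x hx
  have hfin : Module.Finite (A ⧸ m) (B ⧸ mB) := Module.Finite.of_restrictScalars_finite A _ _
  let _ : Field (A ⧸ m) := Ideal.Quotient.field m
  have hart : IsArtinianRing (B ⧸ mB) := IsArtinianRing.of_finite (A ⧸ m) _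
  have hbez : IsBezout (B ⧸ mB) :=
    Function.Surjective.isBezout (Ideal.Quotient.mk mB) Ideal.Quotient.mk_surjective
  have hmk := Ideal.Quotient.mk_surjective (I := mB)
  let M := (IsLocalRing.maximalIdeal B).map (Ideal.Quotient.mk mB)
  obtain ⟨y, hy⟩ := (IsBezout.isPrincipal_of_FG M (IsNoetherian.noetherian M)).principal
  obtain ⟨π, rfl⟩ := hmk y
  have hM : M = (Ideal.span {π}).map (Ideal.Quotient.mk mB) := by
    rw [hy, Ideal.map_span, Set.image_singleton]
  have hmax : IsLocalRing.maximalIdeal B = Ideal.span {π} ⊔ mB := by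
    have h := congrArg (Ideal.comap (Ideal.Quotient.mk mB)) hM
    rw [Ideal.comap_map_of_surjective' _ hmk, Ideal.comap_map_of_surjective' _ hmk,
      Ideal.mk_ker, sup_eq_left.2 hle] at h
    exact h
  refine ⟨π, hmax, ?_⟩
  have hnt : Nontrivial (B ⧸ mB) := Ideal.Quotient.nontrivial_iff.2 fun h =>
    (IsLocalRing.maximalIdeal.isMaximal B).ne_top (top_le_iff.1 (h ▸ hle))
  have hloc : IsLocalRing (B ⧸ mB) := IsLocalRing.of_surjective' _ hmk
  have hnil : IsNilpotent (Ideal.Quotient.mk mB π) := by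
    obtain ⟨e, he⟩ := IsArtinianRing.isNilpotent_jacobson_bot (R := B ⧸ mB)
    refine ⟨e, ?_⟩
    have h1 : Ideal.Quotient.mk mB π ∈ (⊥ : Ideal (B ⧸ mB)).jacobson := by
      rw [IsLocalRing.jacobson_eq_maximalIdeal _ bot_ne_top]
      intro hu
      have hπ : π ∈ IsLocalRing.maximalIdeal B := by
        rw [hmax]; exact Ideal.mem_sup_left (Ideal.mem_span_singleton_self π)
      obtain ⟨c, hc⟩ := hu.exists_right_inv
      obtain ⟨c, rfl⟩ := hmk c
      rw [← map_mul, ← map_one (Ideal.Quotient.mk mB), Ideal.Quotient.eq] at hc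
      have h2 := sub_mem (Ideal.mul_mem_right c _ hπ) (hle hc)
      rw [sub_sub_cancel] at h2
      exact h2 isUnit_one
    have h2 := Ideal.pow_mem_pow h1 e
    rw [he] at h2
    exact h2
  obtain ⟨e, he⟩ := hnil
  exact ⟨e, by rwa [← map_pow, Ideal.Quotient.eq_zero_iff_mem] at he⟩

end Final

/-- Let `A` be a Henselian valuation ring which is not a field, with fraction field `K`, let
`L/K` be a finite Galois extension and let `B` be the integral closure of `A` in `L`.  If `B`
is a finitely generated `A`-module, then `B` is of complete intersection over `A`. -/
theorem complete_intersection_of_module_finite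
    {A K L : Type*} [CommRing A] [IsDomain A] [ValuationRing A] [HenselianLocalRing A]
    (hA : ¬IsField A)
    [Field K] [Algebra A K] [IsFractionRing A K]
    [Field L] [Algebra K L] [Algebra A L] [IsScalarTower A K L]
    [IsGalois K L] [FiniteDimensional K L]
    (hfin : Module.Finite A ↥(integralClosure A L)) :
    IsCompleteIntersectionOver A ↥(integralClosure A L) := by
  have hloc : IsLocalRing (integralClosure A L) := local_main (K := K)
  have hval : ValuationRing (integralClosure A L) := val_main (K := K)
  have hinjL : Function.Injective (algebraMap A L) := by
    rw [IsScalarTower.algebraMap_eq A K L]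
    exact (algebraMap K L).injective.comp (IsFractionRing.injective A K)
  have hinj : Function.Injective (algebraMap A (integralClosure A L)) := by
    intro a b h
    exact hinjL (congrArg Subtype.val h)
  have htf : Module.IsTorsionFree A (integralClosure A L) :=
    Module.isTorsionFree_iff_algebraMap_injective.2 hinj
  have hflat : Module.Flat A (integralClosure A L) := by
    rw [Module.Flat.flat_iff_torsion_eq_bot_of_isBezout,
      ← Submodule.isTorsionFree_iff_torsion_eq_bot]
    exact htf
  have hfree : Module.Free A (integralClosure A L) := Module.free_of_flat_of_isLocalRing
  have hlh : IsLocalHom (algebraMap A (integralClosure A L)) :=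
    Algebra.IsIntegral.isLocalHom _ _
  obtain ⟨π, h1, h2⟩ := exists_unif (A := A) (B := integralClosure A L)
  exact core π h1 h2
end

section
/- Assume the residue field of A has characteristic p > 0 and let L/K be a cyclic Galois extension of degree p, with B the integral closure of A in L. Let y ∈ B, let z ∈ A[y], and assume that for every non-trivial σ ∈ Gal(L/K) there is a unit u of the ring A[y] with σ(z) − z = (σ(y) − y)·u. Then A[y] = A[z]. -/
set_option synthInstance.maxHeartbeats 400000

theorem aux_inj {K L : Type*} [Field K] [Field L] [Algebra K L] [IsGalois K L]
    [FiniteDimensional K L] (p : ℕ) (hp : p.Prime) (hcard : Nat.card (L ≃ₐ[K] L) = p)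
    (y : L) (σ : L ≃ₐ[K] L) (hσ : σ ≠ 1) (h : σ y = y) : y ∈ Set.range (algebraMap K L) := by
  rw [IsGalois.mem_range_algebraMap_iff_fixed]
  intro τ
  have : Fact p.Prime := ⟨hp⟩
  have hτ : τ ∈ Subgroup.zpowers σ := mem_zpowers_of_prime_card hcard hσ
  have hle : Subgroup.zpowers σ ≤ MulAction.stabilizer (L ≃ₐ[K] L) y := by
    rw [Subgroup.zpowers_le]
    exact h
  exact hle hτ

theorem aux_pow {A K L : Type*} [CommRing A] [IsDomain A] [IsIntegrallyClosed A]
    [Field K] [Algebra A K] [IsFractionRing A K]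
    [Field L] [Algebra K L] [Algebra A L] [IsScalarTower A K L] [FiniteDimensional K L]
    (n : ℕ) (hn : Module.finrank K L = n) (y x : L) (hy : IsIntegral A y)
    (hx : x ∈ Algebra.adjoin A {y}) :
    ∃ c : Fin n → A, x = ∑ i : Fin n, y ^ (i : ℕ) * algebraMap A L (c i) := by
  rw [Algebra.adjoin_singleton_eq_range_aeval] at hx
  obtain ⟨f, rfl⟩ := hx
  have hm := minpoly.monic hy
  have hd : (f %ₘ minpoly A y).degree < n := by
    refine (Polynomial.degree_modByMonic_lt f hm).trans_le ?_
    have : (minpoly K y).natDegree ≤ n := hn ▸ minpoly.natDegree_le y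
    rw [minpoly.isIntegrallyClosed_eq_field_fractions' K hy, hm.natDegree_map] at this
    exact Polynomial.degree_le_of_natDegree_le this
  refine ⟨fun i => (f %ₘ minpoly A y).coeff i, ?_⟩
  have h1 : Polynomial.aeval y f = Polynomial.aeval y (f %ₘ minpoly A y) :=
    (Polynomial.aeval_modByMonic_eq_self_of_root (minpoly.aeval A y)).symm
  change Polynomial.aeval y f = _
  rw [h1, Polynomial.aeval_def, Polynomial.eval₂_eq_sum_range' _ (n := n)]
  · rw [Finset.sum_range]
    exact Finset.sum_congr rfl fun i _ => mul_comm _ _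
  · by_cases h0 : f %ₘ minpoly A y = 0
    · rw [h0, Polynomial.natDegree_zero, ← hn]
      exact Module.finrank_pos
    · exact (Polynomial.natDegree_lt_iff_degree_lt h0).2 hd

theorem aux_main {A K L : Type*} [CommRing A] [IsDomain A] [IsIntegrallyClosed A]
    [Field K] [Algebra A K] [IsFractionRing A K]
    [Field L] [Algebra K L] [Algebra A L] [IsScalarTower A K L]
    [IsGalois K L] [FiniteDimensional K L]
    (p : ℕ) (hp : p.Prime) (hcard : Nat.card (L ≃ₐ[K] L) = p)
    (y z : L) (hy : IsIntegral A y) (hz : z ∈ Algebra.adjoin A {y})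
    (hu : ∀ σ : L ≃ₐ[K] L, σ ≠ 1 → ∃ u : L, u ≠ 0 ∧ IsIntegral A u⁻¹ ∧
      σ z - z = (σ y - y) * u) :
    y ∈ Algebra.adjoin A {z} := by
  by_cases hinj : ∀ σ : L ≃ₐ[K] L, σ ≠ 1 → σ y ≠ y
  swap
  · push Not at hinj
    obtain ⟨σ, h1, h2⟩ := hinj
    obtain ⟨k, rfl⟩ := aux_inj p hp hcard y σ h1 h2
    have hk : IsIntegral A k := (isIntegral_algebraMap_iff (algebraMap K L).injective).1 hy
    obtain ⟨a, rfl⟩ := IsIntegrallyClosed.isIntegral_iff.1 hk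
    rw [← IsScalarTower.algebraMap_apply]
    exact Subalgebra.algebraMap_mem _ _
  have hfr : Module.finrank K L = p := by rw [← IsGalois.card_aut_eq_finrank, hcard]
  have hu' : ∀ σ τ : L ≃ₐ[K] L, ∃ u : L, u ≠ 0 ∧ IsIntegral A u⁻¹ ∧
      (σ ≠ τ → σ z - τ z = (σ y - τ y) * u) := by
    intro σ τ
    by_cases h : σ = τ
    · exact ⟨1, one_ne_zero, by rw [inv_one]; exact isIntegral_one, fun h' => absurd h h'⟩
    obtain ⟨u, h0, hi, he⟩ := hu (τ⁻¹ * σ) (by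
      intro h'; exact h (inv_mul_eq_one.1 h').symm)
    have hm : ∀ x, τ ((τ⁻¹ * σ) x) = σ x := fun x => by
      rw [← AlgEquiv.mul_apply, mul_inv_cancel_left]
    refine ⟨τ u, by simpa using h0, ?_, fun _ => ?_⟩
    · rw [← map_inv₀]
      exact hi.map (τ.toAlgHom.restrictScalars A)
    · have := congrArg τ he
      rwa [map_sub, map_mul, map_sub, hm, hm] at this
  choose u hu0 hui hue using hu'
  choose c hc using fun j : Fin p => aux_pow (K := K) p hfr y (z ^ (j : ℕ)) hy
    (Subalgebra.pow_mem _ hz _)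
  have e : Fin p ≃ (L ≃ₐ[K] L) := (Finite.equivFinOfCardEq hcard).symm
  let P : Matrix (Fin p) (Fin p) A := Matrix.of fun i j => c j i
  have hV : Matrix.vandermonde (fun k => e k z) =
      Matrix.vandermonde (fun k => e k y) * P.map (algebraMap A L) := by
    ext k j
    rw [Matrix.vandermonde_apply, Matrix.mul_apply, ← map_pow, hc j, map_sum]
    refine Finset.sum_congr rfl fun i _ => ?_
    rw [map_mul, map_pow, IsScalarTower.algebraMap_apply A K L, AlgEquiv.commutes,
      Matrix.vandermonde_apply, Matrix.map_apply, ← IsScalarTower.algebraMap_apply]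
    rfl
  have hdet := congrArg Matrix.det hV
  have hne : (Matrix.vandermonde (fun k => e k y)).det ≠ 0 := by
    rw [Matrix.det_vandermonde_ne_zero_iff]
    intro i j hij
    by_contra hne
    refine hinj ((e j)⁻¹ * e i) (fun h' => hne (e.injective (inv_mul_eq_one.1 h').symm)) ?_
    rw [AlgEquiv.mul_apply]
    change e i y = e j y at hij
    rw [hij, ← AlgEquiv.mul_apply, inv_mul_cancel]
    rfl
  have hPm : (P.map (algebraMap A L)).det = algebraMap A L P.det :=
    ((algebraMap A L).map_det P).symm
  have hw : algebraMap A L P.det = ∏ i : Fin p, ∏ j ∈ Finset.Ioi i, u (e j) (e i) := by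
    apply mul_left_cancel₀ hne
    rw [← hPm, ← Matrix.det_mul, ← hV, Matrix.det_vandermonde, Matrix.det_vandermonde,
      ← Finset.prod_mul_distrib]
    refine Finset.prod_congr rfl fun i _ => ?_
    rw [← Finset.prod_mul_distrib]
    refine Finset.prod_congr rfl fun j hj => ?_
    exact hue _ _ fun h => (Finset.mem_Ioi.1 hj).ne' (e.injective h)
  have hw0 : algebraMap A L P.det ≠ 0 := by
    rw [hw]
    exact Finset.prod_ne_zero_iff.2 fun i _ => Finset.prod_ne_zero_iff.2 fun j _ => hu0 _ _
  have hwi : IsIntegral A (algebraMap A L P.det)⁻¹ := by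
    rw [hw, ← Finset.prod_inv_distrib]
    refine IsIntegral.prod _ fun i _ => ?_
    rw [← Finset.prod_inv_distrib]
    exact IsIntegral.prod _ fun j _ => hui _ _
  have hunit : IsUnit P.det := by
    rw [IsScalarTower.algebraMap_apply A K L, ← map_inv₀] at hwi
    have hk := (isIntegral_algebraMap_iff (algebraMap K L).injective).1 hwi
    obtain ⟨a, ha⟩ := IsIntegrallyClosed.isIntegral_iff.1 hk
    have h0 : algebraMap A K P.det ≠ 0 := by
      intro h
      apply hw0
      rw [IsScalarTower.algebraMap_apply A K L, h, map_zero]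
    refine IsUnit.of_mul_eq_one a (IsFractionRing.injective A K ?_)
    rw [map_mul, ha, map_one, mul_inv_cancel₀ h0]
  have hPP : P * P⁻¹ = 1 := Matrix.mul_nonsing_inv P hunit
  let i1 : Fin p := ⟨1, hp.one_lt⟩
  have key : y = ∑ j : Fin p, z ^ (j : ℕ) * algebraMap A L (P⁻¹ j i1) := by
    have h1 : ∀ j : Fin p, z ^ (j : ℕ) * algebraMap A L (P⁻¹ j i1) =
        ∑ i : Fin p, y ^ (i : ℕ) * algebraMap A L (P i j * P⁻¹ j i1) := by
      intro j
      rw [hc j, Finset.sum_mul]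
      refine Finset.sum_congr rfl fun i _ => ?_
      rw [map_mul, mul_assoc]
      rfl
    rw [Finset.sum_congr rfl fun j _ => h1 j, Finset.sum_comm]
    have h2 : ∀ i : Fin p, ∑ j : Fin p, y ^ (i : ℕ) * algebraMap A L (P i j * P⁻¹ j i1) =
        if i = i1 then y else 0 := by
      intro i
      rw [← Finset.mul_sum, ← map_sum, ← Matrix.mul_apply, hPP, Matrix.one_apply]
      split_ifs with h
      · subst h; simp [i1]
      · simp
    rw [Finset.sum_congr rfl fun i _ => h2 i]
    simp
  rw [key]
  exact Subalgebra.sum_mem _ fun j _ => Subalgebra.mul_mem _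
    (Subalgebra.pow_mem _ (Algebra.self_mem_adjoin_singleton A z) _)
    (Subalgebra.algebraMap_mem _ _)

/-- Let `A` be a Henselian valuation ring which is not a field, with fraction field `K` and
residue field of characteristic `p > 0`, let `L/K` be a cyclic Galois extension of degree `p`
and let `B` be the integral closure of `A` in `L`.  Let `y ∈ B` and `z ∈ A[y]`, and assume
that for every nontrivial `σ ∈ Gal(L/K)` there is a unit `u` of the ring `A[y]` with
`σ(z) − z = (σ(y) − y)·u`.  Then `A[y] = A[z]`. -/
theorem adjoin_eq_of_sigma_diff
    {A K L : Type*} [CommRing A] [IsDomain A] [ValuationRing A] [HenselianLocalRing A]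
    (hA : ¬IsField A)
    [Field K] [Algebra A K] [IsFractionRing A K]
    [Field L] [Algebra K L] [Algebra A L] [IsScalarTower A K L]
    [IsGalois K L] [FiniteDimensional K L]
    (p : ℕ) (hp : p.Prime) [CharP (IsLocalRing.ResidueField A) p]
    [IsCyclic (L ≃ₐ[K] L)] (hcard : Nat.card (L ≃ₐ[K] L) = p)
    (y z : ↥(integralClosure A L))
    (hz : z ∈ Algebra.adjoin A ({y} : Set ↥(integralClosure A L)))
    (hu : ∀ σ : L ≃ₐ[K] L, σ ≠ 1 →
      ∃ u : (Algebra.adjoin A ({y} : Set ↥(integralClosure A L)))ˣ,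
        σ (z : L) - (z : L) =
          (σ (y : L) - (y : L)) *
            (((u : Algebra.adjoin A ({y} : Set ↥(integralClosure A L))) :
              ↥(integralClosure A L)) : L)) :
    Algebra.adjoin A ({y} : Set ↥(integralClosure A L)) =
      Algebra.adjoin A ({z} : Set ↥(integralClosure A L)) := by
  have hmem : ∀ a b : ↥(integralClosure A L), a ∈ Algebra.adjoin A {b} ↔
      (a : L) ∈ Algebra.adjoin A {(b : L)} := by
    intro a b
    have : Algebra.adjoin A {(b : L)} =
        (Algebra.adjoin A {b}).map (integralClosure A L).val := by
      rw [AlgHom.map_adjoin, Set.image_singleton]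
      rfl
    rw [this, Subalgebra.mem_map]
    constructor
    · intro h
      exact ⟨a, h, rfl⟩
    · rintro ⟨x, hx, hxa⟩
      have : x = a := Subtype.ext hxa
      exact this ▸ hx
  apply le_antisymm
  · rw [Algebra.adjoin_le_iff, Set.singleton_subset_iff, SetLike.mem_coe, hmem]
    refine aux_main (K := K) p hp hcard (y : L) (z : L) y.2 ((hmem _ _).1 hz) ?_
    intro σ hσ
    obtain ⟨u, h⟩ := hu σ hσ
    have hmul : ((((u : Algebra.adjoin A {y}) : ↥(integralClosure A L)) : L)) *
        ((((u⁻¹ : (Algebra.adjoin A {y})ˣ) : Algebra.adjoin A {y}) :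
          ↥(integralClosure A L)) : L) = 1 := by
      have := u.mul_inv
      have := congrArg (fun x : Algebra.adjoin A {y} => ((x : ↥(integralClosure A L)) : L)) this
      exact this
    refine ⟨_, left_ne_zero_of_mul_eq_one hmul, ?_, h⟩
    rw [inv_eq_of_mul_eq_one_right hmul]
    exact Subtype.property _
  · rw [Algebra.adjoin_le_iff, Set.singleton_subset_iff, SetLike.mem_coe]
    exact hz
end
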